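/- arXiv:1111.5901 — 3 statements merged into one kernel-verified Lean document; each statement's English description precedes it below -/
import Mathlib

section
/- There exist first-order formulas φ_<(x,y), φ_◁(x,y), φ_C(x), φ_Q(x) over the language with a single binary relation symbol for Bit such that for every n ∈ ℕ and all a,b ∈ {0,...,n}: the finite prefix structure ({0,...,n}, Bit) satisfies φ_<(a,b) iff a < b, satisfies φ_◁(a,b) iff a ◁ b, satisfies φ_C(a) iff a ∈ C, and satisfies φ_Q(a) iff a ∈ Q. -/
open FirstOrder Language

/-- `q_i = i(i+1)/2`, the smallest element of column `i`. -/
def qseq (i : ℕ) : ℕ := i * (i + 1) / 2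

/-- `c(x)`, the column number of `x`: the largest `i` with `q_i ≤ x`. -/
def col (x : ℕ) : ℕ := Nat.findGreatest (fun i => qseq i ≤ x) x

/-- `q(x) = q_{c(x)}`, the bottom-most element of the column of `x`. -/
def qf (x : ℕ) : ℕ := qseq (col x)

/-- `r(x) = x - q(x)`, the row number of `x`. -/
def rowf (x : ℕ) : ℕ := x - qf x

/-- The row-major linear order `◁`. -/
def ordc (x y : ℕ) : Prop := rowf x < rowf y ∨ (rowf x = rowf y ∧ col x < col y)

/-- The unary predicate `C`: bit `r(x)` of `c(x)+1` is 1. -/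
def Cpred (x : ℕ) : Prop := Nat.testBit (col x + 1) (rowf x) = true

/-- The unary predicate `Q`: bit `r(x)` of `q_{c(x)+1}` is 1. -/
def Qpred (x : ℕ) : Prop := Nat.testBit (qseq (col x + 1)) (rowf x) = true

/-- Relation symbols of the language with a single binary relation `Bit`. -/
inductive BitRel : ℕ → Type
  | bit : BitRel 2

/-- The language with a single binary relation symbol for `Bit`. -/
def LBit : Language := ⟨fun _ => Empty, BitRel⟩

/-- The finite prefix structure `({0,...,n}, Bit)`. -/
def bitStruct (n : ℕ) : LBit.Structure (Fin (n + 1)) where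
  funMap := fun f _ => f.elim
  RelMap := fun r v =>
    match r with
    | .bit => Nat.testBit (v 0 : ℕ) (v 1 : ℕ) = true


set_option linter.style.haveILetI false
set_option synthInstance.maxSize 100000
set_option synthInstance.maxHeartbeats 2000000
set_option maxHeartbeats 2000000

namespace BitDef

/-- `t` is a projection to a variable. -/
class IsVar {k : ℕ} (t : (Fin k → ℕ) → ℕ) : Prop where
  out : ∃ i, t = fun v => v i

/-- `P` is uniformly definable. -/
class Dfn {k : ℕ} (P : ℕ → (Fin k → ℕ) → Prop) : Prop where
  out : ∃ φ : LBit.Formula (Fin k), ∀ n (v : Fin k → Fin (n + 1)),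
    (letI := bitStruct n; φ.Realize v) ↔ P n (fun i => (v i : ℕ))

instance isVar_proj {k : ℕ} (i : Fin k) : IsVar (fun v : Fin k → ℕ => v i) := ⟨i, rfl⟩

instance isVar_cast {k l : ℕ} (t : (Fin k → ℕ) → ℕ) [h : IsVar t] (g : Fin k → Fin l) :
    IsVar (fun v : Fin l → ℕ => t (fun i => v (g i))) := by
  obtain ⟨i, rfl⟩ := h.out
  exact ⟨g i, rfl⟩

theorem Dfn.congr {k : ℕ} {P Q : ℕ → (Fin k → ℕ) → Prop} (hP : Dfn P)
    (h : ∀ n v, (∀ i, v i ≤ n) → (P n v ↔ Q n v)) : Dfn Q := by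
  obtain ⟨φ, hφ⟩ := hP.out
  refine ⟨φ, fun n v => (hφ n v).trans (h n _ fun i => ?_)⟩
  have := (v i).2
  omega

theorem Dfn.sub {k l : ℕ} {P : ℕ → (Fin k → ℕ) → Prop} (hP : Dfn P) (g : Fin k → Fin l) :
    Dfn (fun n (v : Fin l → ℕ) => P n (fun i => v (g i))) := by
  obtain ⟨φ, hφ⟩ := hP.out
  refine ⟨φ.relabel g, fun n v => ?_⟩
  letI := bitStruct n
  rw [Formula.realize_relabel]
  exact hφ n _

instance dfn_and {k : ℕ} (P Q : ℕ → (Fin k → ℕ) → Prop) [hP : Dfn P] [hQ : Dfn Q] :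
    Dfn (fun n v => P n v ∧ Q n v) := by
  obtain ⟨φ, hφ⟩ := hP.out
  obtain ⟨ψ, hψ⟩ := hQ.out
  refine ⟨φ ⊓ ψ, fun n v => ?_⟩
  letI := bitStruct n
  rw [Formula.realize_inf]
  exact and_congr (hφ n v) (hψ n v)

instance dfn_not {k : ℕ} (P : ℕ → (Fin k → ℕ) → Prop) [hP : Dfn P] :
    Dfn (fun n v => ¬ P n v) := by
  obtain ⟨φ, hφ⟩ := hP.out
  refine ⟨∼φ, fun n v => ?_⟩
  letI := bitStruct n
  rw [Formula.realize_not]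
  exact not_congr (hφ n v)

instance dfn_imp {k : ℕ} (P Q : ℕ → (Fin k → ℕ) → Prop) [hP : Dfn P] [hQ : Dfn Q] :
    Dfn (fun n v => P n v → Q n v) := by
  have : Dfn (fun n v => ¬ (P n v ∧ ¬ Q n v)) := inferInstance
  exact this.congr fun n v _ => by tauto

instance dfn_or {k : ℕ} (P Q : ℕ → (Fin k → ℕ) → Prop) [hP : Dfn P] [hQ : Dfn Q] :
    Dfn (fun n v => P n v ∨ Q n v) := by
  have : Dfn (fun n v => ¬ P n v → Q n v) := inferInstance
  exact this.congr fun n v _ => by tauto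

instance dfn_iff {k : ℕ} (P Q : ℕ → (Fin k → ℕ) → Prop) [hP : Dfn P] [hQ : Dfn Q] :
    Dfn (fun n v => (P n v ↔ Q n v)) := by
  have : Dfn (fun n v => (P n v → Q n v) ∧ (Q n v → P n v)) := inferInstance
  exact this.congr fun n v _ => by tauto

instance dfn_ex {k : ℕ} (P : ℕ → (Fin k → ℕ) → ℕ → Prop)
    [hP : Dfn (fun n (v : Fin (k + 1) → ℕ) => P n (fun i => v i.castSucc) (v (Fin.last k)))] :
    Dfn (fun n v => ∃ x, x ≤ n ∧ P n v x) := by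
  obtain ⟨φ, hφ⟩ := hP.out
  let g : Fin (k + 1) → Fin k ⊕ Fin 1 := Fin.snoc (α := fun _ => Fin k ⊕ Fin 1) Sum.inl (Sum.inr 0)
  refine ⟨(φ.relabel g).iExs (Fin 1), fun n v => ?_⟩
  letI := bitStruct n
  rw [Formula.realize_iExs]
  have key : ∀ i : Fin 1 → Fin (n + 1),
      (φ.relabel g).Realize (Sum.elim v i) ↔ P n (fun j => (v j : ℕ)) (i 0) := by
    intro i
    rw [Formula.realize_relabel]
    refine (hφ n _).trans ?_
    simp [g]
  constructor
  · rintro ⟨i, hi⟩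
    exact ⟨i 0, by omega, (key i).1 hi⟩
  · rintro ⟨x, hx, h⟩
    exact ⟨fun _ => ⟨x, by omega⟩, (key _).2 h⟩

instance dfn_all {k : ℕ} (P : ℕ → (Fin k → ℕ) → ℕ → Prop)
    [hP : Dfn (fun n (v : Fin (k + 1) → ℕ) => P n (fun i => v i.castSucc) (v (Fin.last k)))] :
    Dfn (fun n v => ∀ x, x ≤ n → P n v x) := by
  have : Dfn (fun n v => ¬ ∃ x, x ≤ n ∧ ¬ P n v x) := inferInstance
  exact this.congr fun n v _ => by push Not; rfl

instance dfn_bit {k : ℕ} (t s : (Fin k → ℕ) → ℕ) [ht : IsVar t] [hs : IsVar s] :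
    Dfn (fun _ v => Nat.testBit (t v) (s v) = true) := by
  obtain ⟨i, rfl⟩ := ht.out
  obtain ⟨j, rfl⟩ := hs.out
  let R : LBit.Relations 2 := BitRel.bit
  refine ⟨Relations.formula R ![Term.var i, Term.var j], fun n v => ?_⟩
  letI := bitStruct n
  rw [Formula.realize_rel]
  rfl

instance dfn_const {k : ℕ} (p : Prop) : Dfn (fun _ (_ : Fin k → ℕ) => p) := by
  by_cases h : p
  · refine ⟨⊤, fun n v => ?_⟩
    simp [h, Formula.Realize]
  · refine ⟨⊥, fun n v => ?_⟩
    simp [h, Formula.Realize]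

theorem Dfn.sub1 {R : ℕ → ℕ → Prop} (h : Dfn (fun n (v : Fin 1 → ℕ) => R n (v 0)))
    {k : ℕ} (t : (Fin k → ℕ) → ℕ) [ht : IsVar t] :
    Dfn (fun n v => R n (t v)) := by
  obtain ⟨i, rfl⟩ := ht.out
  exact h.sub ![i]

theorem Dfn.sub2 {R : ℕ → ℕ → ℕ → Prop} (h : Dfn (fun n (v : Fin 2 → ℕ) => R n (v 0) (v 1)))
    {k : ℕ} (t s : (Fin k → ℕ) → ℕ) [ht : IsVar t] [hs : IsVar s] :
    Dfn (fun n v => R n (t v) (s v)) := by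
  obtain ⟨i, rfl⟩ := ht.out
  obtain ⟨j, rfl⟩ := hs.out
  exact h.sub ![i, j]

theorem Dfn.sub3 {R : ℕ → ℕ → ℕ → ℕ → Prop}
    (h : Dfn (fun n (v : Fin 3 → ℕ) => R n (v 0) (v 1) (v 2)))
    {k : ℕ} (t s r : (Fin k → ℕ) → ℕ) [ht : IsVar t] [hs : IsVar s] [hr : IsVar r] :
    Dfn (fun n v => R n (t v) (s v) (r v)) := by
  obtain ⟨i, rfl⟩ := ht.out
  obtain ⟨j, rfl⟩ := hs.out
  obtain ⟨l, rfl⟩ := hr.out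
  exact h.sub ![i, j, l]

/-! ### Definability of the order -/

def eqF (n x y : ℕ) : Prop := ∀ z, z ≤ n → (x.testBit z = true ↔ y.testBit z = true)

instance {k : ℕ} (t s : (Fin k → ℕ) → ℕ) [IsVar t] [IsVar s] :
    Dfn (fun n v => eqF n (t v) (s v)) := by unfold eqF; infer_instance

def inU (n T i : ℕ) : Prop := ∃ s, s ≤ n ∧ (T.testBit s = true ∧ s.testBit i = true)

instance {k : ℕ} (t s : (Fin k → ℕ) → ℕ) [IsVar t] [IsVar s] :
    Dfn (fun n v => inU n (t v) (s v)) := by unfold inU; infer_instance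

def ltT (n T i j : ℕ) : Prop :=
  ∃ s, s ≤ n ∧ (T.testBit s = true ∧ s.testBit i = true ∧ ¬ s.testBit j = true)

instance {k : ℕ} (t s r : (Fin k → ℕ) → ℕ) [IsVar t] [IsVar s] [IsVar r] :
    Dfn (fun n v => ltT n (t v) (s v) (r v)) := by unfold ltT; infer_instance

def goodT (n T : ℕ) : Prop :=
  (∀ i, i ≤ n → inU n T i → ∀ l, l ≤ n → i.testBit l = true → inU n T l) ∧
  ∀ i, i ≤ n → ∀ j, j ≤ n → inU n T i → inU n T j → (ltT n T i j ↔
    ∃ k, k ≤ n ∧ (j.testBit k = true ∧ ¬ i.testBit k = true ∧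
      ∀ l, l ≤ n → ¬ (i.testBit l = true ↔ j.testBit l = true) → (eqF n l k ∨ ltT n T l k)))

instance {k : ℕ} (t : (Fin k → ℕ) → ℕ) [IsVar t] :
    Dfn (fun n v => goodT n (t v)) := by unfold goodT; infer_instance

def R0 (n i j : ℕ) : Prop :=
  ∃ T, T ≤ n ∧ (goodT n T ∧ inU n T i ∧ inU n T j ∧ ltT n T i j)

def stepR (R : ℕ → ℕ → ℕ → Prop) (n x y : ℕ) : Prop :=
  ∃ k, k ≤ n ∧ (y.testBit k = true ∧ ¬ x.testBit k = true ∧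
      ∀ l, l ≤ n → ¬ (x.testBit l = true ↔ y.testBit l = true) → (eqF n l k ∨ R n l k))

theorem dfn_R0 : Dfn (fun n (v : Fin 2 → ℕ) => R0 n (v 0) (v 1)) := by
  unfold R0; infer_instance

theorem dfn_stepR {R : ℕ → ℕ → ℕ → Prop} (h : Dfn (fun n (v : Fin 2 → ℕ) => R n (v 0) (v 1))) :
    Dfn (fun n (v : Fin 2 → ℕ) => stepR R n (v 0) (v 1)) := by
  have : ∀ {k : ℕ} (t s : (Fin k → ℕ) → ℕ) [ht : IsVar t] [hs : IsVar s],
    Dfn (fun n v => R n (t v) (s v)) := fun t s => h.sub2 t s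
  unfold stepR; infer_instance

/-! ### Basic facts about bits -/

theorem bit_le {x i : ℕ} (h : x.testBit i = true) : i < x :=
  lt_of_lt_of_le Nat.lt_two_pow_self (Nat.ge_two_pow_of_testBit h)

theorem exists_bits (p : ℕ → Prop) (K : ℕ) :
    ∃ z, z < 2 ^ K ∧ ∀ i, z.testBit i = true ↔ i < K ∧ p i := by
  classical
  refine ⟨Nat.ofBits (fun i : Fin K => decide (p i)), Nat.ofBits_lt_two_pow _, fun i => ?_⟩
  by_cases h : i < K
  · rw [Nat.testBit_ofBits_lt _ _ h]; simp [h]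
  · rw [Nat.testBit_ofBits_ge _ _ (by omega)]; simp [h]

theorem eq_of_bits {x y : ℕ} (h : ∀ i, x.testBit i = true ↔ y.testBit i = true) : x = y :=
  Nat.eq_of_testBit_eq fun i => Bool.eq_iff_iff.2 (h i)

theorem eqF_iff {n x y : ℕ} (hx : x ≤ n) (hy : y ≤ n) : eqF n x y ↔ x = y := by
  constructor
  · intro h
    refine eq_of_bits fun i => ?_
    by_cases hi : i ≤ n
    · exact h i hi
    · constructor
      · intro h'; have := bit_le h'; omega
      · intro h'; have := bit_le h'; omega
  · rintro rfl z _; rfl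

theorem lt_of_bits {x y k : ℕ} (hy : y.testBit k = true) (hx : ¬ x.testBit k = true)
    (h : ∀ l, ¬ (x.testBit l = true ↔ y.testBit l = true) → l ≤ k) : x < y := by
  refine Nat.lt_of_testBit k (by simpa using hx) hy fun j hj => ?_
  by_contra hne
  have := h j (fun h' => hne (Bool.eq_iff_iff.2 h'))
  omega

theorem exists_max_diff {x y : ℕ} (hxy : x ≠ y) :
    ∃ k, ¬ (x.testBit k = true ↔ y.testBit k = true) ∧
      ∀ l, ¬ (x.testBit l = true ↔ y.testBit l = true) → l ≤ k := by
  have hne : x ^^^ y ≠ 0 := by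
    rwa [Ne, Nat.xor_eq_zero_iff]
  obtain ⟨k, hk, hk'⟩ := Nat.exists_most_significant_bit hne
  have hx : ∀ l, ((x ^^^ y).testBit l = true ↔ ¬ (x.testBit l = true ↔ y.testBit l = true)) := by
    intro l
    rw [Nat.testBit_xor]
    cases x.testBit l <;> cases y.testBit l <;> simp
  refine ⟨k, (hx k).1 hk, fun l hl => ?_⟩
  by_contra hlk
  have := hk' l (by omega)
  rw [(hx l).2 hl] at this
  cases this

theorem lt_iff_bits {x y : ℕ} : x < y ↔ ∃ k, y.testBit k = true ∧ ¬ x.testBit k = true ∧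
    ∀ l, ¬ (x.testBit l = true ↔ y.testBit l = true) → l ≤ k := by
  constructor
  · intro h
    obtain ⟨k, hk, hk'⟩ := exists_max_diff (x := x) (y := y) (by omega)
    by_cases hy : y.testBit k = true
    · exact ⟨k, hy, fun hx => hk ⟨fun _ => hy, fun _ => hx⟩, hk'⟩
    · have hx : x.testBit k = true := by
        by_contra hx; exact hk ⟨fun h => absurd h hx, fun h => absurd h hy⟩
      have := lt_of_bits hx hy (fun l hl => hk' l (fun h' => hl h'.symm))
      omega
  · rintro ⟨k, hy, hx, h⟩
    exact lt_of_bits hy hx h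

/-! ### Correctness of the order formula -/

theorem ltT_iff {n T : ℕ} (hT : goodT n T) : ∀ m i j, i ≤ m → j ≤ m → i ≤ n → j ≤ n →
    inU n T i → inU n T j → (ltT n T i j ↔ i < j) := by
  intro m
  induction m using Nat.strong_induction_on with
  | _ m ih =>
    intro i j him hjm hin hjn hi hj
    rw [hT.2 i hin j hjn hi hj, lt_iff_bits]
    have key : ∀ l k, (i.testBit l = true ∨ j.testBit l = true) → j.testBit k = true →
        ((eqF n l k ∨ ltT n T l k) ↔ l ≤ k) := by
      intro l k hl hk
      have hkj := bit_le hk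
      have hlU : inU n T l ∧ l < m := by
        rcases hl with hl | hl
        · have := bit_le hl
          exact ⟨hT.1 i hin hi l (by omega) hl, by omega⟩
        · have := bit_le hl
          exact ⟨hT.1 j hjn hj l (by omega) hl, by omega⟩
      have hkU := hT.1 j hjn hj k (by omega) hk
      have hln : l ≤ n := by
        rcases hl with hl | hl
        · have := bit_le hl; omega
        · have := bit_le hl; omega
      rw [eqF_iff hln (by omega), ih (max l k) (by omega) l k (by omega) (by omega) hln
        (by omega) hlU.1 hkU]
      omega
    constructor
    · rintro ⟨k, hkn, hk1, hk2, hk3⟩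
      refine ⟨k, hk1, hk2, fun l hl => ?_⟩
      have hl' : i.testBit l = true ∨ j.testBit l = true := by tauto
      refine (key l k hl' hk1).1 (hk3 l ?_ hl)
      rcases hl' with hl | hl
      · have := bit_le hl; omega
      · have := bit_le hl; omega
    · rintro ⟨k, hk1, hk2, hk3⟩
      have := bit_le hk1
      refine ⟨k, by omega, hk1, hk2, fun l _ hl => ?_⟩
      exact (key l k (by tauto) hk1).2 (hk3 l hl)

theorem R0_sound {n i j : ℕ} (hi : i ≤ n) (hj : j ≤ n) (h : R0 n i j) : i < j := by
  obtain ⟨T, _, hT, hiU, hjU, hlt⟩ := h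
  exact (ltT_iff hT (max i j) i j (by omega) (by omega) hi hj hiU hjU).1 hlt

theorem R0_complete {n m i j : ℕ} (hm : 2 ^ 2 ^ m ≤ n + 1) (hij : i < j) (hj : j < m) :
    R0 n i j := by
  obtain ⟨T, hTlt, hT⟩ := exists_bits (fun s => ∃ a, a ≤ m ∧ s = 2 ^ a - 1) (2 ^ m)
  have hTn : T ≤ n := by omega
  have hmem : ∀ a, a ≤ m → T.testBit (2 ^ a - 1) = true := by
    intro a ha
    refine (hT _).2 ⟨?_, a, ha, rfl⟩
    have h1 : 2 ^ a ≤ 2 ^ m := Nat.pow_le_pow_right (by norm_num) ha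
    have h2 : 0 < 2 ^ a := by positivity
    omega
  have hU : ∀ l, inU n T l ↔ l < m := by
    intro l
    constructor
    · rintro ⟨s, _, hs, hl⟩
      obtain ⟨-, a, ha, rfl⟩ := (hT s).1 hs
      rw [Nat.testBit_two_pow_sub_one] at hl
      simp at hl; omega
    · intro hl
      have h1 := hmem m le_rfl
      have := bit_le h1
      refine ⟨2 ^ m - 1, by omega, h1, ?_⟩
      rw [Nat.testBit_two_pow_sub_one]; simpa using hl
  have hL : ∀ l k, l < m → k < m → (ltT n T l k ↔ l < k) := by
    intro l k hl hk
    constructor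
    · rintro ⟨s, _, hs, h1, h2⟩
      obtain ⟨-, a, ha, rfl⟩ := (hT s).1 hs
      rw [Nat.testBit_two_pow_sub_one] at h1 h2
      simp at h1 h2; omega
    · intro hlk
      have h1 := hmem k (by omega)
      have := bit_le h1
      refine ⟨2 ^ k - 1, by omega, h1, ?_, ?_⟩ <;>
      · rw [Nat.testBit_two_pow_sub_one]; simp [hlk]
  refine ⟨T, hTn, ⟨?_, ?_⟩, (hU i).2 (by omega), (hU j).2 hj, (hL i j (by omega) hj).2 hij⟩
  · intro a _ ha l _ hl
    have := bit_le hl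
    rw [hU] at ha ⊢; omega
  · intro a han b hbn ha hb
    rw [hU] at ha hb
    rw [hL a b ha hb, lt_iff_bits]
    have key : ∀ l k, (a.testBit l = true ∨ b.testBit l = true) → b.testBit k = true →
        ((eqF n l k ∨ ltT n T l k) ↔ l ≤ k) := by
      intro l k hl hk
      have hkj := bit_le hk
      have hlU : l < m ∧ l ≤ n := by
        rcases hl with hl | hl
        · have := bit_le hl; omega
        · have := bit_le hl; omega
      rw [eqF_iff hlU.2 (by omega), hL l k hlU.1 (by omega)]
      omega
    constructor
    · rintro ⟨k, hk1, hk2, hk3⟩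
      have := bit_le hk1
      refine ⟨k, by omega, hk1, hk2, fun l _ hl => ?_⟩
      exact (key l k (by tauto) hk1).2 (hk3 l hl)
    · rintro ⟨k, hkn, hk1, hk2, hk3⟩
      refine ⟨k, hk1, hk2, fun l hl => ?_⟩
      have hl' : a.testBit l = true ∨ b.testBit l = true := by tauto
      refine (key l k hl' hk1).1 (hk3 l ?_ hl)
      rcases hl' with hl | hl
      · have := bit_le hl; omega
      · have := bit_le hl; omega

theorem stepR_sound {R : ℕ → ℕ → ℕ → Prop} {n : ℕ}
    (hR : ∀ x y, x ≤ n → y ≤ n → R n x y → x < y) :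
    ∀ x y, x ≤ n → y ≤ n → stepR R n x y → x < y := by
  rintro x y hx hy ⟨k, hk, h1, h2, h3⟩
  refine lt_of_bits h1 h2 fun l hl => ?_
  have hln : l ≤ n := by
    have hl' : x.testBit l = true ∨ y.testBit l = true := by tauto
    rcases hl' with hl | hl
    · have := bit_le hl; omega
    · have := bit_le hl; omega
  rcases h3 l hln hl with h | h
  · rw [eqF_iff hln hk] at h; omega
  · have := hR l k hln hk h; omega

theorem stepR_complete {R : ℕ → ℕ → ℕ → Prop} {n N : ℕ}
    (hR : ∀ x y, x < y → y < N → y ≤ n → R n x y) :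
    ∀ x y, x < y → y < 2 ^ N → y ≤ n → stepR R n x y := by
  intro x y hxy hyN hyn
  obtain ⟨k, h1, h2, h3⟩ := lt_iff_bits.1 hxy
  have := bit_le h1
  have hkN : k < N := by
    by_contra hk
    have h4 := Nat.ge_two_pow_of_testBit h1
    have h5 : 2 ^ N ≤ 2 ^ k := Nat.pow_le_pow_right (by norm_num) (by omega)
    omega
  refine ⟨k, by omega, h1, h2, fun l hln hl => ?_⟩
  rcases eq_or_lt_of_le (h3 l hl) with h | h
  · exact Or.inl ((eqF_iff hln (by omega)).2 h)
  · exact Or.inr (hR l k h hkN (by omega))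

def ltF : ℕ → ℕ → ℕ → Prop := stepR (stepR (stepR R0))

theorem dfn_ltF : Dfn (fun n (v : Fin 2 → ℕ) => ltF n (v 0) (v 1)) :=
  dfn_stepR (dfn_stepR (dfn_stepR dfn_R0))

theorem ltF_iff {n x y : ℕ} (hx : x ≤ n) (hy : y ≤ n) : ltF n x y ↔ x < y := by
  constructor
  · exact stepR_sound (stepR_sound (stepR_sound fun _ _ => R0_sound)) x y hx hy
  · intro hxy
    set m := Nat.log 2 (Nat.log 2 (n + 1)) with hm
    have hl0 : Nat.log 2 (n + 1) ≠ 0 := by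
      have := Nat.log_pos (b := 2) (n := n + 1) (by norm_num) (by omega)
      omega
    have h1 : 2 ^ m ≤ Nat.log 2 (n + 1) := Nat.pow_log_le_self 2 hl0
    have h2 : 2 ^ 2 ^ m ≤ n + 1 :=
      (Nat.pow_le_pow_right (by norm_num) h1).trans (Nat.pow_log_le_self 2 (by omega))
    have h3 : Nat.log 2 (n + 1) < 2 ^ (m + 1) := Nat.lt_pow_succ_log_self (by norm_num) _
    have h4 : n + 1 < 2 ^ 2 ^ (m + 1) :=
      (Nat.lt_pow_succ_log_self (b := 2) (by norm_num) (n + 1)).trans_le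
        (Nat.pow_le_pow_right (by norm_num) h3)
    have c0 : ∀ x y, x < y → y < m → y ≤ n → R0 n x y := fun x y a b _ => R0_complete h2 a b
    have c2 := stepR_complete (stepR_complete c0)
    have h5 : 2 ^ (m + 1) ≤ 2 ^ 2 ^ m :=
      Nat.pow_le_pow_right (by norm_num) (Nat.succ_le_of_lt Nat.lt_two_pow_self)
    have c2' : ∀ x y, x < y → y < 2 ^ (m + 1) → y ≤ n → stepR (stepR R0) n x y :=
      fun x y a b c => c2 x y a (b.trans_le h5) c
    exact stepR_complete c2' x y hxy (by omega) hy

theorem IsVar.le {k : ℕ} (t : (Fin k → ℕ) → ℕ) [ht : IsVar t] {n : ℕ} {v : Fin k → ℕ}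
    (hv : ∀ i, v i ≤ n) : t v ≤ n := by
  obtain ⟨i, rfl⟩ := ht.out
  exact hv i

instance dfn_lt {k : ℕ} (t s : (Fin k → ℕ) → ℕ) [IsVar t] [IsVar s] :
    Dfn (fun _ v => t v < s v) :=
  (dfn_ltF.sub2 t s).congr fun _ _ hv => ltF_iff (IsVar.le t hv) (IsVar.le s hv)

instance dfn_le {k : ℕ} (t s : (Fin k → ℕ) → ℕ) [IsVar t] [IsVar s] :
    Dfn (fun _ v => t v ≤ s v) := by
  have : Dfn (fun _ v => ¬ s v < t v) := inferInstance
  exact this.congr fun _ _ _ => not_lt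

instance dfn_eq {k : ℕ} (t s : (Fin k → ℕ) → ℕ) [IsVar t] [IsVar s] :
    Dfn (fun _ v => t v = s v) := by
  have : Dfn (fun n v => eqF n (t v) (s v)) := inferInstance
  exact this.congr fun _ _ hv => eqF_iff (IsVar.le t hv) (IsVar.le s hv)

theorem dfn_eq_num (c : ℕ) : Dfn (fun _ (v : Fin 1 → ℕ) => v 0 = c) := by
  induction c with
  | zero =>
    have : Dfn (fun n (v : Fin 1 → ℕ) => ∀ y, y ≤ n → ¬ y < v 0) := inferInstance
    refine this.congr fun n v hv => ⟨fun h => ?_, fun h => by omega⟩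
    by_contra h0
    exact h 0 (by omega) (by omega)
  | succ c ih =>
    have h1 : ∀ {k : ℕ} (t : (Fin k → ℕ) → ℕ) [IsVar t], Dfn (fun _ v => t v = c) :=
      fun t => ih.sub1 (R := fun _ x => x = c) t
    have : Dfn (fun n (v : Fin 1 → ℕ) => ∃ y, y ≤ n ∧ (y = c ∧ y < v 0 ∧
      ∀ z, z ≤ n → z < v 0 → z ≤ y)) := inferInstance
    refine this.congr fun n v hv => ⟨?_, fun h => ?_⟩
    · rintro ⟨y, _, rfl, h1, h2⟩
      by_contra h0
      have := h2 (y + 1) (by have := hv 0; omega) (by omega)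
      omega
    · have := hv 0
      exact ⟨c, by omega, rfl, by omega, fun z _ hz => by omega⟩

instance dfn_num {k : ℕ} (t : (Fin k → ℕ) → ℕ) [IsVar t] (c : ℕ) :
    Dfn (fun _ v => t v = c) :=
  (dfn_eq_num c).sub1 (R := fun _ x => x = c) t

/-! ### Definability of addition and of shifts -/

def cyF (n a b i : ℕ) : Prop :=
  ∃ j, j ≤ n ∧ (j < i ∧ a.testBit j = true ∧ b.testBit j = true ∧
    ∀ k, k ≤ n → j < k → k < i → (a.testBit k = true ∨ b.testBit k = true))

instance {k : ℕ} (t s r : (Fin k → ℕ) → ℕ) [IsVar t] [IsVar s] [IsVar r] :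
    Dfn (fun n v => cyF n (t v) (s v) (r v)) := by unfold cyF; infer_instance

theorem testBit_iff {a i : ℕ} : a.testBit i = true ↔ a / 2 ^ i % 2 = 1 := by
  rw [Nat.testBit_eq_decide_div_mod_eq]; simp

theorem mod_succ (a i : ℕ) : a % 2 ^ (i + 1) = a % 2 ^ i + 2 ^ i * (a / 2 ^ i % 2) := by
  rw [pow_succ, Nat.mod_mul]

theorem carry_iff (a b i : ℕ) : 2 ^ i ≤ a % 2 ^ i + b % 2 ^ i ↔
    ∃ j, j < i ∧ a.testBit j = true ∧ b.testBit j = true ∧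
    ∀ k, j < k → k < i → (a.testBit k = true ∨ b.testBit k = true) := by
  induction i with
  | zero => simp [Nat.mod_one]
  | succ i ih =>
    have hs : (∃ j, j < i + 1 ∧ a.testBit j = true ∧ b.testBit j = true ∧
        ∀ k, j < k → k < i + 1 → (a.testBit k = true ∨ b.testBit k = true)) ↔
        (a.testBit i = true ∧ b.testBit i = true) ∨ ((a.testBit i = true ∨ b.testBit i = true) ∧
        ∃ j, j < i ∧ a.testBit j = true ∧ b.testBit j = true ∧
        ∀ k, j < k → k < i → (a.testBit k = true ∨ b.testBit k = true)) := by
      constructor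
      · rintro ⟨j, h1, h2, h3, h4⟩
        rcases Nat.lt_succ_iff_lt_or_eq.1 h1 with h | rfl
        · exact Or.inr ⟨h4 i h (by omega), j, h, h2, h3, fun k h5 h6 => h4 k h5 (by omega)⟩
        · exact Or.inl ⟨h2, h3⟩
      · rintro (⟨h1, h2⟩ | ⟨h0, j, h1, h2, h3, h4⟩)
        · exact ⟨i, by omega, h1, h2, fun k h5 h6 => by omega⟩
        · refine ⟨j, by omega, h2, h3, fun k h5 h6 => ?_⟩
          rcases Nat.lt_succ_iff_lt_or_eq.1 h6 with h | rfl
          · exact h4 k h5 h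
          · exact h0
    rw [hs, ← ih, testBit_iff, testBit_iff, mod_succ, mod_succ]
    have ha := Nat.mod_lt a (show 2 ^ i > 0 by positivity)
    have hb := Nat.mod_lt b (show 2 ^ i > 0 by positivity)
    rw [pow_succ]
    rcases Nat.mod_two_eq_zero_or_one (a / 2 ^ i) with h | h <;>
    rcases Nat.mod_two_eq_zero_or_one (b / 2 ^ i) with h' | h' <;>
    · rw [h, h']; omega

theorem cyF_iff {n a b i : ℕ} (hi : i ≤ n) : cyF n a b i ↔ 2 ^ i ≤ a % 2 ^ i + b % 2 ^ i := by
  rw [carry_iff]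
  constructor
  · rintro ⟨j, _, h1, h2, h3, h4⟩
    exact ⟨j, h1, h2, h3, fun k h5 h6 => h4 k (by omega) h5 h6⟩
  · rintro ⟨j, h1, h2, h3, h4⟩
    exact ⟨j, by omega, h1, h2, h3, fun k _ h5 h6 => h4 k h5 h6⟩

theorem testBit_add_iff (a b i : ℕ) : (a + b).testBit i = true ↔
    ((a.testBit i = true ↔ b.testBit i = true) ↔ 2 ^ i ≤ a % 2 ^ i + b % 2 ^ i) := by
  rw [testBit_iff, testBit_iff, testBit_iff, Nat.add_div (by positivity)]
  split_ifs with h <;> simp only [h, iff_true, iff_false] <;> omega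

/-- bit `i` of `a + b` -/
instance dfn_bit_add {k : ℕ} (t s r : (Fin k → ℕ) → ℕ) [IsVar t] [IsVar s] [IsVar r] :
    Dfn (fun _ v => (t v + s v).testBit (r v) = true) := by
  have : Dfn (fun n v => (((t v).testBit (r v) = true ↔ (s v).testBit (r v) = true) ↔
    cyF n (t v) (s v) (r v))) := inferInstance
  refine this.congr fun n v hv => ?_
  rw [testBit_add_iff, cyF_iff (IsVar.le r hv)]

instance dfn_add {k : ℕ} (t s r : (Fin k → ℕ) → ℕ) [IsVar t] [IsVar s] [IsVar r] :
    Dfn (fun _ v => t v + s v = r v) := by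
  have : Dfn (fun n v => ∀ i, i ≤ n → ((t v + s v).testBit i = true ↔
    (r v).testBit i = true)) := inferInstance
  refine this.congr fun n v hv => ⟨fun h => eq_of_bits fun i => ?_, fun h i _ => by rw [h]⟩
  by_cases hi : i ≤ n
  · exact h i hi
  · have h1 := IsVar.le t hv
    have h2 := IsVar.le s hv
    have h3 := IsVar.le r hv
    have h4 : n < 2 ^ n := Nat.lt_two_pow_self
    have h5 : 2 ^ (n + 1) ≤ 2 ^ i := Nat.pow_le_pow_right (by norm_num) (by omega)
    rw [Nat.testBit_lt_two_pow (x := t v + s v) (by omega),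
      Nat.testBit_lt_two_pow (x := r v) (by omega)]

/-- bit of a shifted index -/
instance dfn_bit_idx {k : ℕ} (t s r : (Fin k → ℕ) → ℕ) [IsVar t] [IsVar s] [IsVar r] :
    Dfn (fun _ v => (t v).testBit (s v + r v) = true) := by
  have : Dfn (fun n v => ∃ j, j ≤ n ∧ (s v + r v = j ∧ (t v).testBit j = true)) := inferInstance
  refine this.congr fun n v hv => ⟨?_, fun h => ?_⟩
  · rintro ⟨j, _, rfl, h⟩; exact h
  · have := bit_le h
    have := IsVar.le t hv
    exact ⟨_, by omega, rfl, h⟩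

instance dfn_shift {k : ℕ} (t s r : (Fin k → ℕ) → ℕ) [IsVar t] [IsVar s] [IsVar r] :
    Dfn (fun _ v => t v * 2 ^ s v = r v) := by
  have : Dfn (fun n v => (∀ i, i ≤ n → (t v).testBit i = true → (r v).testBit (s v + i) = true) ∧
    ∀ i, i ≤ n → (r v).testBit i = true → ∃ j, j ≤ n ∧ (s v + j = i ∧ (t v).testBit j = true)) :=
    inferInstance
  refine this.congr fun n v hv => ?_
  have h1 := IsVar.le t hv
  have h3 := IsVar.le r hv
  have hb : ∀ i, ((t v * 2 ^ s v).testBit i = true ↔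
      ∃ j, s v + j = i ∧ (t v).testBit j = true) := by
    intro i
    rw [Nat.testBit_mul_two_pow]
    simp only [Bool.and_eq_true, decide_eq_true_eq]
    constructor
    · rintro ⟨h, h'⟩; exact ⟨i - s v, by omega, h'⟩
    · rintro ⟨j, rfl, h'⟩; exact ⟨by omega, by simpa using h'⟩
  constructor
  · rintro ⟨h, h'⟩
    refine eq_of_bits fun i => (hb i).trans ⟨?_, fun hi => ?_⟩
    · rintro ⟨j, rfl, hj⟩
      have := bit_le hj
      exact h j (by omega) hj
    · have := bit_le hi
      obtain ⟨j, _, h2, h3⟩ := h' i (by omega) hi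
      exact ⟨j, h2, h3⟩
  · intro h
    rw [← h]
    refine ⟨fun i _ hi => (hb _).2 ⟨i, rfl, hi⟩, fun i _ hi => ?_⟩
    obtain ⟨j, hj, hj'⟩ := (hb i).1 hi
    have := bit_le hj'
    exact ⟨j, by omega, hj, hj'⟩

theorem lt_pow_iff {x h : ℕ} : x < 2 ^ h ↔ ∀ i, x.testBit i = true → i < h := by
  constructor
  · intro hx i hi
    by_contra hc
    have h4 := Nat.ge_two_pow_of_testBit hi
    have h5 : 2 ^ h ≤ 2 ^ i := Nat.pow_le_pow_right (by norm_num) (by omega)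
    omega
  · intro hx
    refine Nat.lt_pow_two_of_testBit x fun i hi => ?_
    by_contra hc
    have := hx i (by simpa using hc)
    omega

instance dfn_lt_pow {k : ℕ} (t s : (Fin k → ℕ) → ℕ) [IsVar t] [IsVar s] :
    Dfn (fun _ v => t v < 2 ^ s v) := by
  have : Dfn (fun n v => ∀ i, i ≤ n → (t v).testBit i = true → i < s v) := inferInstance
  refine this.congr fun n v hv => ?_
  rw [lt_pow_iff]
  refine ⟨fun h i hi => h i ?_ hi, fun h i _ hi => h i hi⟩
  have := bit_le hi
  have := IsVar.le t hv
  omega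

/-- the digit of `x` of width `w` at position `u` -/
def dig (x u w : ℕ) : ℕ := x / 2 ^ u % 2 ^ w

theorem testBit_dig (x u w i : ℕ) : (dig x u w).testBit i = true ↔
    i < w ∧ x.testBit (u + i) = true := by
  rw [dig, Nat.testBit_mod_two_pow, Nat.testBit_div_two_pow, add_comm u]
  simp

instance dfn_dig {k : ℕ} (x u w d : (Fin k → ℕ) → ℕ) [IsVar x] [IsVar u] [IsVar w] [IsVar d] :
    Dfn (fun _ v => dig (x v) (u v) (w v) = d v) := by
  have : Dfn (fun n v => ∀ i, i ≤ n → ((d v).testBit i = true ↔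
    (i < w v ∧ (x v).testBit (u v + i) = true))) := inferInstance
  refine this.congr fun n v hv => ?_
  have h1 := IsVar.le x hv
  have h3 := IsVar.le d hv
  constructor
  · intro h
    refine eq_of_bits fun i => (testBit_dig _ _ _ _).trans ?_
    by_cases hi : i ≤ n
    · exact (h i hi).symm
    · constructor
      · rintro ⟨_, h'⟩; have := bit_le h'; omega
      · intro h'; have := bit_le h'; omega
  · intro h i _
    rw [← h, testBit_dig]

/-! ### Small squares -/

instance dfn_succ {k : ℕ} (t s : (Fin k → ℕ) → ℕ) [IsVar t] [IsVar s] :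
    Dfn (fun _ v => t v + 1 = s v) := by
  have : Dfn (fun n v => ∃ c, c ≤ n ∧ (c = 1 ∧ t v + c = s v)) := inferInstance
  refine this.congr fun n v hv => ⟨?_, fun h => ?_⟩
  · rintro ⟨_, _, rfl, h⟩; exact h
  · have := IsVar.le s hv
    exact ⟨1, by omega, rfl, h⟩

instance dfn_next {k : ℕ} (t s r : (Fin k → ℕ) → ℕ) [IsVar t] [IsVar s] [IsVar r] :
    Dfn (fun _ v => t v + 2 * s v + 1 = r v) := by
  have : Dfn (fun n v => ∃ a, a ≤ n ∧ (t v + s v = a ∧ ∃ b, b ≤ n ∧ (a + s v = b ∧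
    b + 1 = r v))) := inferInstance
  refine this.congr fun n v hv => ⟨?_, fun h => ?_⟩
  · rintro ⟨_, _, rfl, _, _, rfl, h⟩; omega
  · have := IsVar.le r hv
    exact ⟨_, by omega, rfl, _, by omega, rfl, by omega⟩

def EF (n S u y : ℕ) : Prop := S.testBit u = true ∧ ∃ z, z ≤ n ∧ (u + 2 * y + 1 = z ∧
  S.testBit z = true ∧ ∀ t, t ≤ n → u < t → t < z → ¬ S.testBit t = true)

instance {k : ℕ} (t s r : (Fin k → ℕ) → ℕ) [IsVar t] [IsVar s] [IsVar r] :
    Dfn (fun n v => EF n (t v) (s v) (r v)) := by unfold EF; infer_instance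

def goodS (n S : ℕ) : Prop := (∃ o, o ≤ n ∧ (o = 0 ∧ EF n S o o)) ∧
  ∀ u, u ≤ n → ∀ y, y ≤ n → EF n S u y → ∀ z, z ≤ n → u + 2 * y + 1 = z →
    ((∃ y', y' ≤ n ∧ (y + 1 = y' ∧ EF n S z y')) ∨ ∀ t, t ≤ n → S.testBit t = true → t ≤ z)

instance {k : ℕ} (t : (Fin k → ℕ) → ℕ) [IsVar t] :
    Dfn (fun n v => goodS n (t v)) := by unfold goodS; infer_instance

def Sq (n y x : ℕ) : Prop := ∃ S, S ≤ n ∧ (goodS n S ∧ EF n S x y)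

instance {k : ℕ} (t s : (Fin k → ℕ) → ℕ) [IsVar t] [IsVar s] :
    Dfn (fun n v => Sq n (t v) (s v)) := by unfold Sq; infer_instance

theorem Sq_sound {n y x : ℕ} (h : Sq n y x) : y * y = x := by
  obtain ⟨S, hSn, ⟨⟨_, _, rfl, h0⟩, hstep⟩, hxy⟩ := h
  have hE : ∀ u y, EF n S u y → S.testBit u = true ∧ S.testBit (u + 2 * y + 1) = true ∧
      ∀ t, u < t → t < u + 2 * y + 1 → ¬ S.testBit t = true := by
    rintro u y ⟨h1, _, hn, rfl, h2, h3⟩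
    exact ⟨h1, h2, fun t ht ht' => h3 t (by omega) ht ht'⟩
  have key : ∀ i, EF n S (i * i) i ∨ ∀ t, S.testBit t = true → t ≤ i * i := by
    intro i
    induction i with
    | zero => exact Or.inl h0
    | succ i ih =>
      have hz : i * i + 2 * i + 1 = (i + 1) * (i + 1) := by ring
      rcases ih with h | h
      · have h' := hE _ _ h
        have hb := bit_le h'.2.1
        rcases hstep (i * i) (by omega) i (by omega) h _ (by omega) rfl with ⟨y', _, rfl, h3⟩ | h3
        · left; rw [← hz]; exact h3
        · right; rw [← hz]
          intro t ht
          have := bit_le ht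
          exact h3 t (by omega) ht
      · right
        intro t ht
        have := h t ht
        omega
  obtain ⟨h1, h2, h3⟩ := hE _ _ hxy
  have hs1 := Nat.sqrt_le x
  have hs2 := Nat.lt_succ_sqrt x
  rw [Nat.succ_eq_add_one] at hs2
  generalize Nat.sqrt x = i at hs1 hs2
  have hz : i * i + 2 * i + 1 = (i + 1) * (i + 1) := by ring
  rcases key i with h | h
  · obtain ⟨g1, g2, g3⟩ := hE _ _ h
    have hx : x = i * i := by
      by_contra hne
      exact g3 x (by omega) (by omega) h1
    subst hx
    have : y = i := by
      rcases lt_trichotomy y i with hlt | heq | hgt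
      · exact absurd h2 (g3 _ (by omega) (by omega))
      · exact heq
      · exact absurd g2 (h3 _ (by omega) (by omega))
    rw [this]
  · have := h _ h2
    omega

theorem Sq_complete {n y K : ℕ} (hK : 2 ^ K ≤ n + 1) (hy : (y + 1) * (y + 1) < K) :
    Sq n y (y * y) := by
  obtain ⟨S, hSlt, hS⟩ := exists_bits (fun s => ∃ i, s = i * i) K
  have hSn : S ≤ n := by omega
  have hKn : K ≤ n := by
    have : K < 2 ^ K := Nat.lt_two_pow_self
    omega
  have hE : ∀ i, (i + 1) * (i + 1) < K → EF n S (i * i) i := by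
    intro i hi
    have hz : i * i + 2 * i + 1 = (i + 1) * (i + 1) := by ring
    refine ⟨(hS _).2 ⟨by omega, i, rfl⟩, _, by omega, hz, (hS _).2 ⟨by omega, _, rfl⟩, ?_⟩
    intro t _ h1 h2 h3
    obtain ⟨-, j, rfl⟩ := (hS _).1 h3
    have := Nat.mul_self_lt_mul_self_iff.1 h1
    have := Nat.mul_self_lt_mul_self_iff.1 h2
    omega
  refine ⟨S, hSn, ⟨⟨0, by omega, rfl, hE 0 ?_⟩, ?_⟩, hE y hy⟩
  · nlinarith
  · rintro u _ y _ ⟨h1, _, _, rfl, h2, h3⟩ z hz rfl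
    obtain ⟨hu, i, rfl⟩ := (hS _).1 h1
    obtain ⟨hj', j, hj⟩ := (hS _).1 h2
    have hij : i < j := by
      apply Nat.mul_self_lt_mul_self_iff.1
      omega
    have hj1 : j = i + 1 := by
      by_contra hne
      have hlt : i + 1 < j := by omega
      have h4 := Nat.mul_self_lt_mul_self_iff.2 hlt
      have h5 : i * i < (i + 1) * (i + 1) := Nat.mul_self_lt_mul_self_iff.2 (by omega)
      exact h3 ((i + 1) * (i + 1)) (by omega) h5 (by omega) ((hS _).2 ⟨by omega, _, rfl⟩)
    subst hj1
    have hyi : y = i := by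
      have : i * i + 2 * i + 1 = (i + 1) * (i + 1) := by ring
      omega
    subst hyi
    by_cases hc : (y + 1 + 1) * (y + 1 + 1) < K
    · left
      refine ⟨y + 1, by omega, rfl, ?_⟩
      rw [hj]
      exact hE _ hc
    · right
      intro t _ ht
      obtain ⟨h6, l, rfl⟩ := (hS _).1 ht
      rw [hj]
      have : l < y + 1 + 1 := by
        apply Nat.mul_self_lt_mul_self_iff.1
        omega
      exact Nat.mul_self_le_mul_self (by omega)

/-! ### Small multiplication and doubling -/

def Snd (R : ℕ → ℕ → ℕ → ℕ → Prop) : Prop := ∀ n a b p, R n a b p → a * b = p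

def Cpl (R : ℕ → ℕ → ℕ → ℕ → Prop) (n h : ℕ) : Prop :=
  ∀ a b, a < 2 ^ h → b < 2 ^ h → a ≤ n → b ≤ n → a * b ≤ n → R n a b (a * b)

def SM0 (n a b p : ℕ) : Prop :=
  ∃ sa, sa ≤ n ∧ (Sq n a sa ∧ ∃ sb, sb ≤ n ∧ (Sq n b sb ∧ ∃ c, c ≤ n ∧ (a + b = c ∧
  ∃ sc, sc ≤ n ∧ (Sq n c sc ∧ ∃ e, e ≤ n ∧ (p + p = e ∧ ∃ f, f ≤ n ∧ (sa + sb = f ∧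
  f + e = sc))))))

theorem dfn_SM0 : Dfn (fun n (v : Fin 3 → ℕ) => SM0 n (v 0) (v 1) (v 2)) := by
  unfold SM0; infer_instance

theorem SM0_sound : Snd SM0 := by
  rintro n a b p ⟨sa, _, h1, sb, _, h2, c, _, rfl, sc, _, h3, e, _, rfl, f, _, rfl, h4⟩
  have h1 := Sq_sound h1
  have h2 := Sq_sound h2
  have h3 := Sq_sound h3
  have : (a + b) * (a + b) = a * a + b * b + 2 * (a * b) := by ring
  omega

theorem SM0_complete {n h K : ℕ} (hK : 2 ^ K ≤ n + 1) (h4 : 2 ^ (2 * h + 2) ≤ K) :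
    Cpl SM0 n h := by
  intro a b ha hb _ _ _
  have hKn : K ≤ n := by
    have : K < 2 ^ K := Nat.lt_two_pow_self
    omega
  have e : 2 ^ (2 * h + 2) = (2 * 2 ^ h) * (2 * 2 ^ h) := by ring
  have hab : (a + b + 1) * (a + b + 1) < K := by
    have : a + b + 1 < 2 * 2 ^ h := by omega
    have := Nat.mul_self_lt_mul_self_iff.2 this
    omega
  have ha' : (a + 1) * (a + 1) ≤ (a + b + 1) * (a + b + 1) := Nat.mul_self_le_mul_self (by omega)
  have hb' : (b + 1) * (b + 1) ≤ (a + b + 1) * (a + b + 1) := Nat.mul_self_le_mul_self (by omega)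
  have e1 : (a + b) * (a + b) = a * a + b * b + (a * b + a * b) := by ring
  have e2 : (a + b + 1) * (a + b + 1) = (a + b) * (a + b) + 2 * (a + b) + 1 := by ring
  exact ⟨a * a, by omega, Sq_complete hK (by omega), b * b, by omega, Sq_complete hK (by omega),
    a + b, by omega, rfl, _, by omega, Sq_complete hK hab, a * b + a * b, by omega, rfl,
    a * a + b * b, by omega, rfl, e1.symm⟩

def dbl (R : ℕ → ℕ → ℕ → ℕ → Prop) (n a b p : ℕ) : Prop :=
  ∃ h, h ≤ n ∧ ∃ a0, a0 ≤ n ∧ ∃ a1, a1 ≤ n ∧ ∃ b0, b0 ≤ n ∧ ∃ b1, b1 ≤ n ∧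
  ((∃ c, c ≤ n ∧ (a1 * 2 ^ h = c ∧ c + a0 = a)) ∧ (∃ c, c ≤ n ∧ (b1 * 2 ^ h = c ∧ c + b0 = b)) ∧
  ∃ p00, p00 ≤ n ∧ (R n a0 b0 p00 ∧ ∃ p01, p01 ≤ n ∧ (R n a0 b1 p01 ∧
  ∃ p10, p10 ≤ n ∧ (R n a1 b0 p10 ∧ ∃ p11, p11 ≤ n ∧ (R n a1 b1 p11 ∧
  ∃ m, m ≤ n ∧ (p01 + p10 = m ∧ ∃ m', m' ≤ n ∧ (m * 2 ^ h = m' ∧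
  ∃ q, q ≤ n ∧ (p11 * 2 ^ h = q ∧ ∃ q', q' ≤ n ∧ (q * 2 ^ h = q' ∧
  ∃ s, s ≤ n ∧ (q' + m' = s ∧ s + p00 = p))))))))))

theorem dfn_dbl {R : ℕ → ℕ → ℕ → ℕ → Prop}
    (h : Dfn (fun n (v : Fin 3 → ℕ) => R n (v 0) (v 1) (v 2))) :
    Dfn (fun n (v : Fin 3 → ℕ) => dbl R n (v 0) (v 1) (v 2)) := by
  have : ∀ {k : ℕ} (t s r : (Fin k → ℕ) → ℕ) [ht : IsVar t] [hs : IsVar s] [hr : IsVar r],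
    Dfn (fun n v => R n (t v) (s v) (r v)) := fun t s r => h.sub3 t s r
  unfold dbl; infer_instance

theorem dbl_sound {R : ℕ → ℕ → ℕ → ℕ → Prop} (hR : Snd R) : Snd (dbl R) := by
  rintro n a b p ⟨h, _, a0, _, a1, _, b0, _, b1, _, ⟨_, _, rfl, rfl⟩, ⟨_, _, rfl, rfl⟩,
    p00, _, h00, p01, _, h01, p10, _, h10, p11, _, h11, _, _, rfl, _, _, rfl, _, _, rfl,
    _, _, rfl, _, _, rfl, rfl⟩
  rw [← hR _ _ _ _ h00, ← hR _ _ _ _ h01, ← hR _ _ _ _ h10, ← hR _ _ _ _ h11]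
  ring

theorem dbl_complete {R : ℕ → ℕ → ℕ → ℕ → Prop} {n h : ℕ} (hn : h ≤ n) (hR : Cpl R n h) :
    Cpl (dbl R) n (2 * h) := by
  intro a b ha hb han hbn hab
  have hpos : 0 < 2 ^ h := by positivity
  have e : 2 ^ (2 * h) = 2 ^ h * 2 ^ h := by ring
  rw [e] at ha hb
  have ha1 := Nat.div_lt_of_lt_mul ha
  have hb1 := Nat.div_lt_of_lt_mul hb
  have ha0 := Nat.mod_lt a hpos
  have hb0 := Nat.mod_lt b hpos
  have ea := Nat.div_add_mod a (2 ^ h)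
  have eb := Nat.div_add_mod b (2 ^ h)
  generalize a / 2 ^ h = a1 at *
  generalize b / 2 ^ h = b1 at *
  generalize a % 2 ^ h = a0 at *
  generalize b % 2 ^ h = b0 at *
  subst ea eb
  have E : (2 ^ h * a1 + a0) * (2 ^ h * b1 + b0) =
    a1 * b1 * 2 ^ h * 2 ^ h + (a0 * b1 + a1 * b0) * 2 ^ h + a0 * b0 := by ring
  rw [E] at hab ⊢
  have l1 : a1 ≤ a1 * 2 ^ h := Nat.le_mul_of_pos_right _ hpos
  have l2 : b1 ≤ b1 * 2 ^ h := Nat.le_mul_of_pos_right _ hpos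
  have l3 : a0 * b1 + a1 * b0 ≤ (a0 * b1 + a1 * b0) * 2 ^ h := Nat.le_mul_of_pos_right _ hpos
  have l4 : a1 * b1 ≤ a1 * b1 * 2 ^ h := Nat.le_mul_of_pos_right _ hpos
  have l5 : a1 * b1 * 2 ^ h ≤ a1 * b1 * 2 ^ h * 2 ^ h := Nat.le_mul_of_pos_right _ hpos
  rw [mul_comm (2 ^ h) a1] at han ⊢
  rw [mul_comm (2 ^ h) b1] at hbn ⊢
  generalize hx1 : a1 * b1 * 2 ^ h * 2 ^ h = X1 at *
  generalize hx2 : (a0 * b1 + a1 * b0) * 2 ^ h = X2 at *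
  exact ⟨h, hn, a0, by omega, a1, by omega, b0, by omega, b1, by omega,
    ⟨_, by omega, rfl, rfl⟩, ⟨_, by omega, rfl, rfl⟩,
    _, by omega, hR a0 b0 ha0 hb0 (by omega) (by omega) (by omega),
    _, by omega, hR a0 b1 ha0 hb1 (by omega) (by omega) (by omega),
    _, by omega, hR a1 b0 ha1 hb0 (by omega) (by omega) (by omega),
    _, by omega, hR a1 b1 ha1 hb1 (by omega) (by omega) (by omega),
    _, by omega, rfl, X2, by omega, hx2, _, by omega, rfl, X1, by omega, hx1,
    _, by omega, rfl, rfl⟩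

/-- multiplication of small (polylogarithmic) numbers -/
def SM : ℕ → ℕ → ℕ → ℕ → Prop := dbl (dbl SM0)

instance {k : ℕ} (t s r : (Fin k → ℕ) → ℕ) [IsVar t] [IsVar s] [IsVar r] :
    Dfn (fun n v => SM n (t v) (s v) (r v)) := (dfn_dbl (dfn_dbl dfn_SM0)).sub3 t s r

theorem SM_sound : Snd SM := dbl_sound (dbl_sound SM0_sound)

/-! ### Multiplication of a number by a small number -/

def MS (n m y x : ℕ) : Prop :=
  ∃ w, w ≤ n ∧ ∃ T, T ≤ n ∧ ∃ M, M ≤ n ∧ ∃ o, o ≤ n ∧ (o = 0 ∧ o < w ∧ M.testBit o = true ∧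
  dig T o w = o ∧ ∀ u, u ≤ n → M.testBit u = true → ∃ u', u' ≤ n ∧ (u + w = u' ∧
  ∃ t, t ≤ n ∧ (dig T u w = t ∧ ∃ t', t' ≤ n ∧ (dig T u' w = t' ∧
  ∃ yu, yu ≤ n ∧ (dig y u w = yu ∧ ∃ xu, xu ≤ n ∧ (dig x u w = xu ∧
  ∃ g, g ≤ n ∧ (SM n m yu g ∧ ∃ h, h ≤ n ∧ (t' * 2 ^ w = h ∧ ∃ s, s ≤ n ∧ (t + g = s ∧ xu + h = s ∧
  (M.testBit u' = true ∨ (x < 2 ^ u' ∧ y < 2 ^ u' ∧ T < 2 ^ u')))))))))))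

instance {k : ℕ} (t s r : (Fin k → ℕ) → ℕ) [IsVar t] [IsVar s] [IsVar r] :
    Dfn (fun n v => MS n (t v) (s v) (r v)) := by
  unfold MS; infer_instance

theorem mod_add (x u w : ℕ) : x % 2 ^ (u + w) = x % 2 ^ u + 2 ^ u * dig x u w := by
  rw [pow_add, Nat.mod_mul]; rfl

theorem MS_sound : Snd MS := by
  rintro n m y x ⟨w, hw, T, hT, M, hM, _, _, rfl, hw0, hM0, hT0, hstep⟩
  have key : ∀ i, (M.testBit (i * w) = true ∧
      m * (y % 2 ^ (i * w)) = x % 2 ^ (i * w) + dig T (i * w) w * 2 ^ (i * w)) ∨ m * y = x := by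
    intro i
    induction i with
    | zero => left; rw [zero_mul, hT0]; simp [hM0, Nat.mod_one]
    | succ i ih =>
      rcases ih with ⟨h1, h2⟩ | h
      · have hb := bit_le h1
        obtain ⟨_, _, rfl, _, _, rfl, _, _, rfl, _, _, rfl, _, _, rfl, g, _, hg, _, _, rfl,
          _, _, rfl, h3, h4⟩ := hstep (i * w) (by omega) h1
        rw [add_mul, one_mul]
        generalize i * w = u at *
        have hg := SM_sound _ _ _ _ hg
        have h5 : m * (y % 2 ^ (u + w)) = x % 2 ^ (u + w) + dig T (u + w) w * 2 ^ (u + w) := by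
          rw [mod_add, mod_add, mul_add, h2, pow_add]
          have : m * (2 ^ u * dig y u w) = 2 ^ u * g := by rw [← hg]; ring
          rw [this]
          have h6 : 2 ^ u * (dig x u w + dig T (u + w) w * 2 ^ w) = 2 ^ u * (dig T u w + g) := by
            rw [h3]
          linarith
        rcases h4 with h4 | ⟨h6, h7, h8⟩
        · exact Or.inl ⟨h4, h5⟩
        · right
          have : dig T (u + w) w = 0 := by
            rw [dig, Nat.div_eq_of_lt h8, Nat.zero_mod]
          rw [this, Nat.mod_eq_of_lt h6, Nat.mod_eq_of_lt h7] at h5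
          omega
      · exact Or.inr h
  rcases key (M + 1) with ⟨h, _⟩ | h
  · have := bit_le h
    have : (M + 1) * 1 ≤ (M + 1) * w := Nat.mul_le_mul_left _ hw0
    omega
  · exact h

theorem MS_complete {n w K m y : ℕ} (hw0 : 0 < w) (hm0 : 0 < m) (hm : m < 2 ^ w)
    (hSM : Cpl SM n w) (hwn : 2 ^ (2 * w + 1) ≤ n + 1) (hK : 0 < K) (hKn : 2 ^ (K * w) ≤ n + 1)
    (hx : m * y < 2 ^ (K * w)) : MS n m y (m * y) := by
  set t : ℕ → ℕ := fun u => m * (y % 2 ^ u) / 2 ^ u with ht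
  have hyx : y ≤ m * y := Nat.le_mul_of_pos_left _ hm0
  have ht_lt : ∀ u, t u < 2 ^ w := by
    intro u
    refine lt_of_le_of_lt ?_ hm
    apply Nat.le_of_lt_succ
    apply Nat.div_lt_of_lt_mul
    have h1 := Nat.mod_lt y (show 2 ^ u > 0 by positivity)
    have h2 : m * (y % 2 ^ u) ≤ m * 2 ^ u := Nat.mul_le_mul_left _ h1.le
    have h3 : 2 ^ u * m.succ = m * 2 ^ u + 2 ^ u := by rw [Nat.succ_eq_add_one]; ring
    have h4 : 0 < 2 ^ u := by positivity
    omega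
  have ht_eq : ∀ u, m * (y % 2 ^ u) = (m * y) % 2 ^ u + t u * 2 ^ u := by
    intro u
    have h1 := Nat.div_add_mod (m * (y % 2 ^ u)) (2 ^ u)
    rw [Nat.mul_mod_mod] at h1
    rw [← h1, mul_comm (t u)]
    simp only [ht]
    rw [add_comm]
  have hw1 : ∀ i r, r < w → (i * w + r) / w = i ∧ (i * w + r) % w = r := by
    intro i r hr
    constructor
    · rw [mul_comm, Nat.mul_add_div hw0, Nat.div_eq_of_lt hr, add_zero]
    · rw [mul_comm, Nat.mul_add_mod, Nat.mod_eq_of_lt hr]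
  obtain ⟨T, hTlt, hT⟩ := exists_bits (fun i => (t (i / w * w)).testBit (i % w) = true) (K * w)
  obtain ⟨M, hMlt, hM⟩ := exists_bits (fun i => ∃ j, i = j * w) (K * w)
  have hdT : ∀ i, i ≤ K → dig T (i * w) w = t (i * w) := by
    intro i hi
    rcases eq_or_lt_of_le hi with rfl | hi
    · rw [dig, Nat.div_eq_of_lt hTlt, Nat.zero_mod]
      simp only [ht]
      rw [Nat.mod_eq_of_lt (lt_of_le_of_lt hyx hx), Nat.div_eq_of_lt hx]
    · refine eq_of_bits fun r => ?_
      rw [testBit_dig, hT]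
      have h1 : (i + 1) * w ≤ K * w := Nat.mul_le_mul_right _ hi
      rw [add_mul, one_mul] at h1
      constructor
      · rintro ⟨h2, h3, h4⟩
        rwa [(hw1 i r h2).1, (hw1 i r h2).2] at h4
      · intro h
        have h2 : r < w := lt_pow_iff.1 (ht_lt _) r h
        refine ⟨h2, by omega, ?_⟩
        rwa [(hw1 i r h2).1, (hw1 i r h2).2]
  have hKw : K * w ≤ n := by
    have : K * w < 2 ^ (K * w) := Nat.lt_two_pow_self
    omega
  have hwK : w ≤ K * w := Nat.le_mul_of_pos_left _ hK
  have e2 : 2 ^ (2 * w + 1) = 2 * (2 ^ w * 2 ^ w) := by ring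
  have hBB : 2 ^ w ≤ 2 ^ w * 2 ^ w := Nat.le_mul_of_pos_left _ (by positivity)
  have hdig : ∀ x u, dig x u w < 2 ^ w := fun x u => Nat.mod_lt _ (by positivity)
  refine ⟨w, by omega, T, by omega, M, by omega, 0, by omega, rfl, hw0, (hM 0).2 ⟨by omega, 0, by simp⟩,
    ?_, ?_⟩
  · have := hdT 0 (by omega)
    rw [zero_mul] at this
    rw [this]
    simp [ht, Nat.mod_one]
  · intro u _ hu
    obtain ⟨hulat, i, rfl⟩ := (hM u).1 hu
    have hi : i < K := lt_of_mul_lt_mul_right hulat (Nat.zero_le w)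
    have h1 : (i + 1) * w ≤ K * w := Nat.mul_le_mul_right _ hi
    have hd1 := hdT i hi.le
    have hd2 := hdT (i + 1) hi
    rw [add_mul, one_mul] at h1 hd2
    have q1 := hdig y (i * w)
    have q2 := hdig (m * y) (i * w)
    have q3 := hdig T (i * w)
    have q4 := hdig T (i * w + w)
    have q5 : m * dig y (i * w) w < 2 ^ w * 2 ^ w := Nat.mul_lt_mul'' hm q1
    have q6 : dig T (i * w + w) w * 2 ^ w < 2 ^ w * 2 ^ w :=
      Nat.mul_lt_mul_of_pos_right q4 (by positivity)
    refine ⟨_, by omega, rfl, _, by omega, rfl, _, by omega, rfl, _, by omega, rfl,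
      _, by omega, rfl, m * dig y (i * w) w, by omega, hSM m _ hm q1 (by omega) (by omega) (by omega),
      _, by omega, rfl, _, by omega, rfl, ?_, ?_⟩
    · have g1 := ht_eq (i * w)
      have g2 := ht_eq (i * w + w)
      rw [mod_add, mod_add, mul_add, g1, pow_add] at g2
      rw [hd1, hd2]
      have hpos : 0 < 2 ^ (i * w) := by positivity
      apply Nat.eq_of_mul_eq_mul_left hpos
      linarith
    · by_cases hc : i + 1 < K
      · left
        refine (hM _).2 ⟨?_, i + 1, by ring⟩
        have := Nat.mul_lt_mul_of_pos_right hc hw0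
        rw [add_mul, one_mul] at this
        exact this
      · right
        have : K = i + 1 := by omega
        subst this
        rw [add_mul, one_mul] at hx hTlt
        exact ⟨hx, lt_of_le_of_lt hyx hx, hTlt⟩

/-! ### Full multiplication by Chinese remaindering -/

def ModMul (n a b p m : ℕ) : Prop :=
  ∃ ya, ya ≤ n ∧ ∃ a', a' ≤ n ∧ ∃ ra, ra ≤ n ∧ (MS n m ya a' ∧ a' + ra = a ∧
  ∃ yb, yb ≤ n ∧ ∃ b', b' ≤ n ∧ ∃ rb, rb ≤ n ∧ (MS n m yb b' ∧ b' + rb = b ∧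
  ∃ yp, yp ≤ n ∧ ∃ p', p' ≤ n ∧ ∃ rp, rp ≤ n ∧ (MS n m yp p' ∧ p' + rp = p ∧
  ∃ z, z ≤ n ∧ (SM n ra rb z ∧ ∃ q, q ≤ n ∧ ∃ zz, zz ≤ n ∧ (SM n m q zz ∧ zz + rp = z)))))

instance {k : ℕ} (a b p m : (Fin k → ℕ) → ℕ) [IsVar a] [IsVar b] [IsVar p] [IsVar m] :
    Dfn (fun n v => ModMul n (a v) (b v) (p v) (m v)) := by
  unfold ModMul; infer_instance

theorem ModMul_sound {n a b p m : ℕ} (h : ModMul n a b p m) : (m : ℤ) ∣ (a : ℤ) * b - p := by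
  obtain ⟨ya, _, _, _, ra, _, h1, rfl, yb, _, _, _, rb, _, h2, rfl, yp, _, _, _, rp, _, h3, rfl,
    z, _, h4, q, _, zz, _, h5, h6⟩ := h
  have h1 := MS_sound _ _ _ _ h1
  have h2 := MS_sound _ _ _ _ h2
  have h3 := MS_sound _ _ _ _ h3
  have h4 := SM_sound _ _ _ _ h4
  have h5 := SM_sound _ _ _ _ h5
  subst h1 h2 h3 h4 h5
  refine ⟨m * ya * yb + ya * rb + yb * ra - yp + q, ?_⟩
  have : (m : ℤ) * q + rp = ra * rb := by exact_mod_cast h6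
  push_cast
  linear_combination (-1) * this

theorem ModMul_complete {n w K m a b : ℕ} (hw0 : 0 < w) (hm0 : 0 < m) (hm : m < 2 ^ w)
    (hSM : Cpl SM n w) (hwn : 2 ^ (2 * w + 1) ≤ n + 1) (hK : 0 < K) (hKn : 2 ^ (K * w) ≤ n + 1)
    (ha : a < 2 ^ (K * w)) (hb : b < 2 ^ (K * w)) (hp : a * b < 2 ^ (K * w)) :
    ModMul n a b (a * b) m := by
  have hMS : ∀ x, x < 2 ^ (K * w) → MS n m (x / m) (m * (x / m)) := fun x hx =>
    MS_complete hw0 hm0 hm hSM hwn hK hKn (lt_of_le_of_lt (Nat.mul_div_le x m) hx)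
  have e2 : 2 ^ (2 * w + 1) = 2 * (2 ^ w * 2 ^ w) := by ring
  have hBB : 2 ^ w ≤ 2 ^ w * 2 ^ w := Nat.le_mul_of_pos_left _ (by positivity)
  have ra := Nat.mod_lt a hm0
  have rb := Nat.mod_lt b hm0
  have rp := Nat.mod_lt (a * b) hm0
  have l1 := Nat.div_le_self a m
  have l2 := Nat.div_le_self b m
  have l3 := Nat.div_le_self (a * b) m
  have d1 := Nat.div_add_mod a m
  have d2 := Nat.div_add_mod b m
  have d3 := Nat.div_add_mod (a * b) m
  have hz : a % m * (b % m) < m * m := Nat.mul_lt_mul'' ra rb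
  have hmm : m * m < 2 ^ w * 2 ^ w := Nat.mul_lt_mul'' hm hm
  have hq : a % m * (b % m) / m < m := Nat.div_lt_of_lt_mul hz
  have d4 := Nat.div_add_mod (a % m * (b % m)) m
  rw [← Nat.mul_mod] at d4
  exact ⟨a / m, by omega, _, by omega, a % m, by omega, hMS a ha, d1,
    b / m, by omega, _, by omega, b % m, by omega, hMS b hb, d2,
    a * b / m, by omega, _, by omega, a * b % m, by omega, hMS _ hp, d3,
    _, by omega, hSM _ _ (by omega) (by omega) (by omega) (by omega) (by omega),
    a % m * (b % m) / m, by omega, m * (a % m * (b % m) / m), by omega,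
    hSM _ _ hm (by omega) (by omega) (by omega) (by omega), d4⟩

theorem two_pow_le_centralBinom (N : ℕ) : 2 ^ N ≤ Nat.centralBinom N := by
  induction N with
  | zero => simp
  | succ N ih =>
    have h := Nat.succ_mul_centralBinom_succ N
    have h2 : (N + 1) * (2 * 2 ^ N) ≤ (N + 1) * Nat.centralBinom (N + 1) := by
      rw [h]
      nlinarith
    rw [pow_succ, mul_comm]
    exact Nat.le_of_mul_le_mul_left h2 (Nat.succ_pos N)

theorem centralBinom_dvd {N D : ℕ} (hD : D ≠ 0) (h : ∀ m, 0 < m → m ≤ 2 * N → m ∣ D) :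
    Nat.centralBinom N ∣ D := by
  rw [← Nat.factorization_prime_le_iff_dvd (Nat.centralBinom_ne_zero N) hD]
  intro p hp
  have h1 : (Nat.centralBinom N).factorization p ≤ Nat.log p (2 * N) := by
    rw [Nat.centralBinom_eq_two_mul_choose]
    exact Nat.factorization_choose_le_log
  refine h1.trans ?_
  rcases Nat.eq_zero_or_pos N with rfl | hN
  · simp
  · rw [← hp.pow_dvd_iff_le_factorization hD]
    exact h _ (pow_pos hp.pos _) (Nat.pow_log_le_self p (by omega))

def Mult0 (n a b p : ℕ) : Prop :=
  ∃ h, h ≤ n ∧ ∃ h2, h2 ≤ n ∧ ∃ h4, h4 ≤ n ∧ (h + h = h2 ∧ h2 + h2 = h4 ∧ a < 2 ^ h ∧ b < 2 ^ h ∧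
  p < 2 ^ h2 ∧ ∃ o, o ≤ n ∧ (o = 0 ∧ ∀ m, m ≤ n → o < m → m ≤ h4 → ModMul n a b p m))

theorem dfn_Mult0 : Dfn (fun n (v : Fin 3 → ℕ) => Mult0 n (v 0) (v 1) (v 2)) := by
  unfold Mult0; infer_instance

theorem Mult0_sound : Snd Mult0 := by
  rintro n a b p ⟨h, _, _, _, _, h4, rfl, rfl, ha, hb, hp, _, _, rfl, hm⟩
  by_contra hne
  have hab : a * b < 2 ^ (h + h) := by rw [pow_add]; exact Nat.mul_lt_mul'' ha hb
  have hD : ((a : ℤ) * b - p).natAbs ≠ 0 := by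
    rw [Int.natAbs_ne_zero, sub_ne_zero]
    exact_mod_cast hne
  have h1 := centralBinom_dvd (N := h + h) hD (fun m h0 hm' => by
    have := ModMul_sound (hm m (by omega) h0 (by omega))
    exact Int.natCast_dvd.1 this)
  have h2 := Nat.le_of_dvd (Nat.pos_of_ne_zero hD) h1
  have h3 := two_pow_le_centralBinom (h + h)
  have h5 : ((a : ℤ) * b - p).natAbs < 2 ^ (h + h) := by
    have e : (a : ℤ) * b = ((a * b : ℕ) : ℤ) := by push_cast; rfl
    rw [e]
    omega
  omega

theorem Mult0_complete {n w h : ℕ} (hw0 : 0 < w) (hm : 4 * h < 2 ^ w)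
    (hSM : Cpl SM n w) (hwn : 2 ^ (2 * w + 1) ≤ n + 1) (hn : 2 ^ (2 * h + w) ≤ n + 1) :
    Cpl Mult0 n h := by
  intro a b ha hb han hbn hab
  have hwlt : 2 ^ w ≤ 2 ^ (2 * h + w) := Nat.pow_le_pow_right (by omega) (by omega)
  have habl : a * b < 2 ^ (h + h) := by rw [pow_add]; exact Nat.mul_lt_mul'' ha hb
  have hdm := Nat.div_add_mod (2 * h) w
  have hml := Nat.mod_lt (2 * h) hw0
  have e : (2 * h / w + 1) * w = w * (2 * h / w) + w := by ring
  have hKn : 2 ^ ((2 * h / w + 1) * w) ≤ n + 1 :=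
    le_trans (Nat.pow_le_pow_right (by omega) (by omega)) hn
  have hKb : 2 ^ (h + h) ≤ 2 ^ ((2 * h / w + 1) * w) :=
    Nat.pow_le_pow_right (by omega) (by omega)
  have hhh : 2 ^ h ≤ 2 ^ (h + h) := Nat.pow_le_pow_right (by omega) (by omega)
  refine ⟨h, by omega, _, by omega, _, by omega, rfl, rfl, ha, hb, habl, 0, by omega, rfl, ?_⟩
  intro m _ hm0 hm4
  exact ModMul_complete (K := 2 * h / w + 1) hw0 hm0 (by omega) hSM hwn (Nat.succ_pos _) hKn (by omega) (by omega)
    (by omega)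

def mulF : ℕ → ℕ → ℕ → ℕ → Prop := dbl (dbl (dbl Mult0))

instance {k : ℕ} (t s r : (Fin k → ℕ) → ℕ) [IsVar t] [IsVar s] [IsVar r] :
    Dfn (fun n v => mulF n (t v) (s v) (r v)) :=
  (dfn_dbl (dfn_dbl (dfn_dbl dfn_Mult0))).sub3 t s r

theorem mulF_sound : Snd mulF := dbl_sound (dbl_sound (dbl_sound Mult0_sound))

theorem pow_four_bound (k : ℕ) : 8 * (k + 2) + 1 ≤ 2 ^ (2 * (k + 2) + 2) := by
  induction k with
  | zero => norm_num
  | succ k ih =>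
    have : 2 ^ (2 * (k + 1 + 2) + 2) = 4 * 2 ^ (2 * (k + 2) + 2) := by
      rw [show 2 * (k + 1 + 2) + 2 = (2 * (k + 2) + 2) + 2 by ring, pow_add]; ring
    omega

theorem mulF_complete {n a b : ℕ} (hn : 2 ^ 64 ≤ n) (ha : a ≤ n) (hb : b ≤ n) (hab : a * b ≤ n) :
    mulF n a b (a * b) := by
  have hn0 : n ≠ 0 := by omega
  have hL1 := Nat.pow_log_le_self 2 hn0
  have hL2 : n < 2 ^ (Nat.log 2 n + 1) := Nat.lt_pow_succ_log_self (by omega) n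
  have hL3 : 64 ≤ Nat.log 2 n := Nat.le_log_of_pow_le (by omega) hn
  generalize Nat.log 2 n = L at hL1 hL2 hL3
  have hl1 := Nat.pow_log_le_self 2 (show L ≠ 0 by omega)
  have hl2 : L < 2 ^ (Nat.log 2 L + 1) := Nat.lt_pow_succ_log_self (by omega) L
  have hl3 : 6 ≤ Nat.log 2 L := Nat.le_log_of_pow_le (by omega) (by omega)
  generalize Nat.log 2 L = l at hl1 hl2 hl3
  obtain ⟨k, hk⟩ : ∃ k, l / 2 = k + 3 := ⟨l / 2 - 3, by omega⟩
  have hp1 : 2 ^ (2 * (k + 2) + 2) ≤ L :=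
    le_trans (Nat.pow_le_pow_right (by omega) (by omega)) hl1
  have hp2 : L < 2 ^ (2 * (2 * (k + 2))) :=
    lt_of_lt_of_le hl2 (Nat.pow_le_pow_right (by omega) (by omega))
  have hb8 := pow_four_bound k
  have hLn : L < 2 ^ L := Nat.lt_two_pow_self
  have c0 : Cpl SM0 n (k + 2) := SM0_complete (K := L) (by omega) hp1
  have c1 := dbl_complete (by omega) c0
  have c2 : Cpl SM n (2 * (2 * (k + 2))) := dbl_complete (by omega) c1
  have hh : 2 ^ (2 * (2 * (2 * (k + 2))) + 1) ≤ 2 ^ L := Nat.pow_le_pow_right (by omega) (by omega)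
  have hh2 : 2 ^ (2 * (L / 4) + 2 * (2 * (k + 2))) ≤ 2 ^ L :=
    Nat.pow_le_pow_right (by omega) (by omega)
  have c3 : Cpl Mult0 n (L / 4) :=
    Mult0_complete (by omega) (by omega) c2 (by omega) (by omega)
  have c4 := dbl_complete (by omega) c3
  have c5 := dbl_complete (by omega) c4
  have c6 : Cpl mulF n (2 * (2 * (2 * (L / 4)))) := dbl_complete (by omega) c5
  have hb : 2 ^ (L + 1) ≤ 2 ^ (2 * (2 * (2 * (L / 4)))) :=
    Nat.pow_le_pow_right (by omega) (by omega)
  exact c6 a b (by omega) (by omega) (by omega) (by omega) hab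

/-! ### Columns -/

theorem qseq_succ (c : ℕ) : qseq (c + 1) = qseq c + (c + 1) := by
  unfold qseq
  rw [show (c + 1) * (c + 1 + 1) = c * (c + 1) + (c + 1) * 2 by ring,
    Nat.add_mul_div_right _ _ (by omega)]

theorem qseq_mono : Monotone qseq := monotone_nat_of_le_succ fun c => by rw [qseq_succ]; omega

theorem le_qseq (c : ℕ) : c ≤ qseq c := by
  induction c with
  | zero => simp
  | succ c ih => rw [qseq_succ]; omega

theorem col_eq {x c : ℕ} (h1 : qseq c ≤ x) (h2 : x < qseq (c + 1)) : col x = c := by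
  unfold col
  rw [Nat.findGreatest_eq_iff]
  refine ⟨(le_qseq c).trans h1, fun _ => h1, fun {m} hm _ h => ?_⟩
  have := qseq_mono (show c + 1 ≤ m from hm)
  omega

theorem col_spec (x : ℕ) : qseq (col x) ≤ x ∧ x < qseq (col x + 1) := by
  induction x with
  | zero => simp [col, qseq]
  | succ x ih =>
    by_cases h : x + 1 < qseq (col x + 1)
    · rw [col_eq (by omega) h]; omega
    · have h1 := qseq_succ (col x + 1)
      rw [col_eq (c := col x + 1) (by omega) (by omega)]; omega

def triF (n c q : ℕ) : Prop :=
  ∃ e, e ≤ n ∧ (c + 1 = e ∧ ∃ d, d ≤ n ∧ ((d + d = c ∧ mulF n d e q) ∨ (d + d = e ∧ mulF n c d q)))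

instance {k : ℕ} (t s : (Fin k → ℕ) → ℕ) [IsVar t] [IsVar s] :
    Dfn (fun n v => triF n (t v) (s v)) := by unfold triF; infer_instance

theorem triF_sound {n c q : ℕ} (h : triF n c q) : qseq c = q := by
  obtain ⟨_, _, rfl, d, _, ⟨rfl, h⟩ | ⟨h0, h⟩⟩ := h
  · rw [← mulF_sound _ _ _ _ h, qseq, show (d + d) * (d + d + 1) = d * (d + d + 1) * 2 by ring,
      Nat.mul_div_cancel _ (by omega)]
  · rw [← mulF_sound _ _ _ _ h, qseq, ← h0, show c * (d + d) = c * d * 2 by ring,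
      Nat.mul_div_cancel _ (by omega)]

theorem triF_complete {n c : ℕ} (hn : 2 ^ 64 ≤ n) (hq : qseq c ≤ n) (hc : c + 1 ≤ n) :
    triF n c (qseq c) := by
  refine ⟨c + 1, hc, rfl, ?_⟩
  rcases Nat.even_or_odd' c with ⟨d, rfl | rfl⟩
  · have e : qseq (2 * d) = d * (2 * d + 1) := by
      rw [qseq, show (2 * d) * (2 * d + 1) = d * (2 * d + 1) * 2 by ring,
        Nat.mul_div_cancel _ (by omega)]
    rw [e] at hq ⊢
    exact ⟨d, by omega, Or.inl ⟨by omega, mulF_complete hn (by omega) (by omega) hq⟩⟩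
  · have e : qseq (2 * d + 1) = (2 * d + 1) * (d + 1) := by
      rw [qseq, show (2 * d + 1) * (2 * d + 1 + 1) = (2 * d + 1) * (d + 1) * 2 by ring,
        Nat.mul_div_cancel _ (by omega)]
    rw [e] at hq ⊢
    exact ⟨d + 1, by omega, Or.inr ⟨by omega, mulF_complete hn (by omega) (by omega) hq⟩⟩

def colF (n x c r q : ℕ) : Prop := triF n c q ∧ q + r = x ∧ r ≤ c

instance {k : ℕ} (t s r q : (Fin k → ℕ) → ℕ) [IsVar t] [IsVar s] [IsVar r] [IsVar q] :
    Dfn (fun n v => colF n (t v) (s v) (r v) (q v)) := by unfold colF; infer_instance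

theorem colF_sound {n x c r q : ℕ} (h : colF n x c r q) : c = col x ∧ r = rowf x ∧ q = qseq (col x) := by
  obtain ⟨h1, rfl, h2⟩ := h
  have h1 := triF_sound h1
  subst h1
  have : col (qseq c + r) = c := col_eq (by omega) (by rw [qseq_succ]; omega)
  refine ⟨this.symm, ?_, by rw [this]⟩
  rw [rowf, qf, this]; omega

theorem col_lt {n x : ℕ} (hn : 2 ^ 64 ≤ n) (hx : x ≤ n) : col x + 1 ≤ n := by
  have h := (col_spec x).1
  rcases Nat.lt_or_ge (col x) 2 with h2 | h2
  · omega
  · obtain ⟨d, hd⟩ : ∃ d, col x = d + 1 := ⟨col x - 1, by omega⟩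
    rw [hd, qseq_succ] at h
    have := le_qseq d
    omega

theorem colF_complete {n x : ℕ} (hn : 2 ^ 64 ≤ n) (hx : x ≤ n) :
    colF n x (col x) (rowf x) (qseq (col x)) := by
  have h := col_spec x
  rw [qseq_succ] at h
  refine ⟨triF_complete hn (by omega) (col_lt hn hx), ?_, ?_⟩ <;> rw [rowf, qf] <;> omega

theorem rowf_le (x : ℕ) : rowf x ≤ x := Nat.sub_le _ _

def ordF (n x y : ℕ) : Prop :=
  ∃ c, c ≤ n ∧ ∃ r, r ≤ n ∧ ∃ q, q ≤ n ∧ (colF n x c r q ∧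
  ∃ c', c' ≤ n ∧ ∃ r', r' ≤ n ∧ ∃ q', q' ≤ n ∧ (colF n y c' r' q' ∧
  (r < r' ∨ (r = r' ∧ c < c'))))

theorem dfn_ordF : Dfn (fun n (v : Fin 2 → ℕ) => ordF n (v 0) (v 1)) := by
  unfold ordF; infer_instance

theorem ordF_iff {n x y : ℕ} (hn : 2 ^ 64 ≤ n) (hx : x ≤ n) (hy : y ≤ n) :
    ordF n x y ↔ ordc x y := by
  constructor
  · rintro ⟨c, _, r, _, q, _, h1, c', _, r', _, q', _, h2, h3⟩
    obtain ⟨rfl, rfl, rfl⟩ := colF_sound h1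
    obtain ⟨rfl, rfl, rfl⟩ := colF_sound h2
    exact h3
  · intro h
    have a1 := col_lt hn hx
    have a2 := col_lt hn hy
    have b1 := rowf_le x
    have b2 := rowf_le y
    have d1 := (col_spec x).1
    have d2 := (col_spec y).1
    exact ⟨_, by omega, _, by omega, _, by omega, colF_complete hn hx,
      _, by omega, _, by omega, _, by omega, colF_complete hn hy, h⟩

def CF (n x : ℕ) : Prop :=
  ∃ c, c ≤ n ∧ ∃ r, r ≤ n ∧ ∃ q, q ≤ n ∧ (colF n x c r q ∧
  ∃ e, e ≤ n ∧ (c + 1 = e ∧ e.testBit r = true))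

theorem dfn_CF : Dfn (fun n (v : Fin 1 → ℕ) => CF n (v 0)) := by
  unfold CF; infer_instance

theorem CF_iff {n x : ℕ} (hn : 2 ^ 64 ≤ n) (hx : x ≤ n) : CF n x ↔ Cpred x := by
  constructor
  · rintro ⟨c, _, r, _, q, _, h1, _, _, rfl, h3⟩
    obtain ⟨rfl, rfl, rfl⟩ := colF_sound h1
    exact h3
  · intro h
    have a1 := col_lt hn hx
    have b1 := rowf_le x
    have d1 := (col_spec x).1
    exact ⟨_, by omega, _, by omega, _, by omega, colF_complete hn hx, _, by omega, rfl, h⟩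

def QF (n x : ℕ) : Prop :=
  ∃ c, c ≤ n ∧ ∃ r, r ≤ n ∧ ∃ q, q ≤ n ∧ (colF n x c r q ∧
  ∃ e, e ≤ n ∧ (c + 1 = e ∧ (q + e).testBit r = true))

theorem dfn_QF : Dfn (fun n (v : Fin 1 → ℕ) => QF n (v 0)) := by
  unfold QF; infer_instance

theorem QF_iff {n x : ℕ} (hn : 2 ^ 64 ≤ n) (hx : x ≤ n) : QF n x ↔ Qpred x := by
  constructor
  · rintro ⟨c, _, r, _, q, _, h1, _, _, rfl, h3⟩
    obtain ⟨rfl, rfl, rfl⟩ := colF_sound h1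
    rw [Qpred, qseq_succ]
    exact h3
  · intro h
    rw [Qpred, qseq_succ] at h
    have a1 := col_lt hn hx
    have b1 := rowf_le x
    have d1 := (col_spec x).1
    exact ⟨_, by omega, _, by omega, _, by omega, colF_complete hn hx, _, by omega, rfl, h⟩

/-! ### Finitely many exceptions -/

theorem dfn_finset_ex {k : ℕ} {ι : Type} [DecidableEq ι] (P : ι → ℕ → (Fin k → ℕ) → Prop)
    (hP : ∀ i, Dfn (P i)) (s : Finset ι) : Dfn (fun n v => ∃ i ∈ s, P i n v) := by
  induction s using Finset.induction_on with
  | empty => exact (dfn_const False).congr fun n v _ => by simp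
  | insert a s _ ih =>
    have := hP a
    have h : Dfn (fun n v => P a n v ∨ ∃ i ∈ s, P i n v) := dfn_or _ _
    exact h.congr fun n v _ => by simp

theorem dfn_finset_all {k : ℕ} {ι : Type} [DecidableEq ι] (P : ι → ℕ → (Fin k → ℕ) → Prop)
    (hP : ∀ i, Dfn (P i)) (s : Finset ι) : Dfn (fun n v => ∀ i ∈ s, P i n v) := by
  have h := dfn_finset_ex (fun i n v => ¬ P i n v) (fun i => by have := hP i; exact dfn_not _) s
  exact (dfn_not (fun n v => ∃ i ∈ s, ¬ P i n v)).congr fun n v _ => by push Not; rfl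

theorem dfn_size {k : ℕ} (N : ℕ) : Dfn (fun n (_ : Fin k → ℕ) => n = N) := by
  have : Dfn (fun n (_ : Fin k → ℕ) => (∃ x, x ≤ n ∧ x = N) ∧ ¬ ∃ x, x ≤ n ∧ x = N + 1) :=
    inferInstance
  refine this.congr fun n v _ => ?_
  constructor
  · rintro ⟨⟨x, h, rfl⟩, h2⟩
    by_contra hne
    exact h2 ⟨_, by omega, rfl⟩
  · rintro rfl
    exact ⟨⟨_, le_rfl, rfl⟩, by rintro ⟨x, h, rfl⟩; omega⟩

theorem dfn_at {k : ℕ} (Q : (Fin k → ℕ) → Prop) (N : ℕ) :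
    Dfn (fun n (v : Fin k → ℕ) => n = N ∧ Q v) := by
  classical
  have h1 : Dfn (fun n (v : Fin k → ℕ) => ∃ w ∈ (Finset.univ : Finset (Fin k → Fin (N + 1))),
      ((∀ i ∈ (Finset.univ : Finset (Fin k)), v i = (w i : ℕ)) ∧ Q (fun i => (w i : ℕ)))) := by
    apply dfn_finset_ex
    intro w
    have := dfn_finset_all (fun (i : Fin k) _ (v : Fin k → ℕ) => v i = (w i : ℕ))
      (fun i => inferInstance) Finset.univ
    exact dfn_and _ _
  have h2 := dfn_size (k := k) N
  refine (dfn_and _ _ (hP := h2) (hQ := h1)).congr fun n v hv => ?_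
  constructor
  · rintro ⟨rfl, w, _, hw, hQ⟩
    refine ⟨rfl, ?_⟩
    have : v = fun i => (w i : ℕ) := funext fun i => hw i (Finset.mem_univ i)
    rw [this]; exact hQ
  · rintro ⟨rfl, hQ⟩
    exact ⟨rfl, fun i => ⟨v i, Nat.lt_succ_of_le (hv i)⟩, Finset.mem_univ _, fun i _ => rfl, hQ⟩

theorem Dfn.patch {k : ℕ} {Q : (Fin k → ℕ) → Prop} (N : ℕ) : ∀ {P : ℕ → (Fin k → ℕ) → Prop},
    Dfn P → (∀ n v, N ≤ n → (∀ i, v i ≤ n) → (P n v ↔ Q v)) → Dfn (fun _ v => Q v) := by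
  induction N with
  | zero => exact fun hP h => hP.congr fun n v hv => h n v (Nat.zero_le _) hv
  | succ N ih =>
    intro P hP h
    have h1 := dfn_at Q N
    have h2 := dfn_size (k := k) N
    have h3 : Dfn (fun n (v : Fin k → ℕ) => (n = N ∧ Q v) ∨ (¬ n = N ∧ P n v)) := by
      have := dfn_not (fun n (_ : Fin k → ℕ) => n = N)
      have := dfn_and (fun n (_ : Fin k → ℕ) => ¬ n = N) P
      exact dfn_or _ _
    refine ih h3 fun n v hn hv => ?_
    by_cases hN : n = N
    · simp [hN]
    · simp only [hN, false_and, not_false_eq_true, true_and, false_or]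
      exact h n v (by omega) hv

theorem dfn_ordc : Dfn (fun _ (v : Fin 2 → ℕ) => ordc (v 0) (v 1)) :=
  Dfn.patch (Q := fun v => ordc (v 0) (v 1)) (2 ^ 64) dfn_ordF
    fun _ _ hn hv => ordF_iff hn (hv 0) (hv 1)

theorem dfn_C : Dfn (fun _ (v : Fin 1 → ℕ) => Cpred (v 0)) :=
  Dfn.patch (Q := fun v => Cpred (v 0)) (2 ^ 64) dfn_CF fun _ _ hn hv => CF_iff hn (hv 0)

theorem dfn_Q : Dfn (fun _ (v : Fin 1 → ℕ) => Qpred (v 0)) :=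
  Dfn.patch (Q := fun v => Qpred (v 0)) (2 ^ 64) dfn_QF fun _ _ hn hv => QF_iff hn (hv 0)

end BitDef

/-- Lemma 3.2: there are FO(Bit)-formulas defining `<`, `◁`, `C`, `Q`
in every finite prefix structure `({0,...,n}, Bit)`. -/
theorem bit_defines_lt_ordc_C_Q :
    ∃ (φlt φordc : LBit.Formula (Fin 2)) (φC φQ : LBit.Formula (Fin 1)),
      ∀ n : ℕ,
        letI := bitStruct n
        ∀ a b : Fin (n + 1),
          (φlt.Realize ![a, b] ↔ (a : ℕ) < (b : ℕ)) ∧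
          (φordc.Realize ![a, b] ↔ ordc (a : ℕ) (b : ℕ)) ∧
          (φC.Realize ![a] ↔ Cpred (a : ℕ)) ∧
          (φQ.Realize ![a] ↔ Qpred (a : ℕ)) := by
  have hlt : BitDef.Dfn (fun _ (v : Fin 2 → ℕ) => v 0 < v 1) := inferInstance
  obtain ⟨φ1, h1⟩ := hlt.out
  obtain ⟨φ2, h2⟩ := BitDef.dfn_ordc.out
  obtain ⟨φ3, h3⟩ := BitDef.dfn_C.out
  obtain ⟨φ4, h4⟩ := BitDef.dfn_Q.out
  exact ⟨φ1, φ2, φ3, φ4, fun n a b => ⟨h1 n ![a, b], h2 n ![a, b], h3 n ![a], h4 n ![a]⟩⟩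
end

section
/- There is a first-order formula φ_Bit(x,y) over the language with binary relation symbols for < and ◁ and unary relation symbols for C and Q such that for every n ∈ ℕ and all a,b ∈ {0,...,n}, the finite prefix structure ({0,...,n}, <, ◁, C, Q) satisfies φ_Bit(a,b) iff Bit(a,b) holds, i.e. iff bit b of the binary representation of a is 1. Together with the definability of <, ◁, C, Q from Bit in every finite prefix, this shows FO(<,◁,C,Q) and FO(Bit) define exactly the same relations in every finite prefix. -/
open FirstOrder Language

/-- Relation symbols of the language with binary `<`, `◁` and unary `C`, `Q`. -/
inductive Rel4 : ℕ → Type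
  | lt : Rel4 2
  | ordc : Rel4 2
  | C : Rel4 1
  | Q : Rel4 1

/-- The language with binary relation symbols for `<` and `◁` and unary `C`, `Q`. -/
def L4 : Language := ⟨fun _ => Empty, Rel4⟩

/-- The finite prefix structure `({0,...,n}, <, ◁, C, Q)`. -/
def struct4 (n : ℕ) : L4.Structure (Fin (n + 1)) where
  funMap := fun f _ => f.elim
  RelMap := fun r v =>
    match r with
    | .lt => (v 0 : ℕ) < (v 1 : ℕ)
    | .ordc => ordc (v 0 : ℕ) (v 1 : ℕ)
    | .C => Cpred (v 0 : ℕ)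
    | .Q => Qpred (v 0 : ℕ)


/-! ### Arithmetic of the triangular enumeration -/

lemma qseq_zero : qseq 0 = 0 := rfl

lemma qseq_succ (i : ℕ) : qseq (i + 1) = qseq i + i + 1 := by
  unfold qseq
  have : (i + 1) * (i + 1 + 1) = i * (i + 1) + (i + 1) * 2 := by ring
  rw [this, Nat.add_mul_div_right _ _ (by norm_num)]
  omega

lemma qseq_mono : Monotone qseq :=
  monotone_nat_of_le_succ fun i => by rw [qseq_succ]; omega

lemma le_qseq (i : ℕ) : i ≤ qseq i := by
  induction i with
  | zero => simp
  | succ k ih => rw [qseq_succ]; omega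

lemma qseq_col_le (x : ℕ) : qseq (col x) ≤ x :=
  Nat.findGreatest_spec (P := fun i => qseq i ≤ x) (Nat.zero_le x) (by simp [qseq_zero])

lemma lt_qseq_col (x : ℕ) : x < qseq (col x + 1) := by
  by_contra h
  push Not at h
  have h1 : col x + 1 ≤ x := (le_qseq _).trans h
  have := Nat.le_findGreatest (P := fun i => qseq i ≤ x) h1 h
  change col x + 1 ≤ col x at this
  omega

lemma eq_add (x : ℕ) : x = qseq (col x) + rowf x := by
  have := qseq_col_le x
  unfold rowf qf
  omega

lemma rowf_le (x : ℕ) : rowf x ≤ col x := by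
  have h1 := eq_add x
  have h2 := lt_qseq_col x
  rw [qseq_succ] at h2
  omega

lemma col_eq {c r : ℕ} (h : r ≤ c) : col (qseq c + r) = c := by
  have h1 := qseq_col_le (qseq c + r)
  have h2 := lt_qseq_col (qseq c + r)
  apply le_antisymm
  · by_contra hc
    push Not at hc
    have := qseq_mono (show c + 1 ≤ col (qseq c + r) from hc)
    rw [qseq_succ] at this
    omega
  · by_contra hc
    push Not at hc
    have := qseq_mono (show col (qseq c + r) + 1 ≤ c from hc)
    omega

lemma row_eq {c r : ℕ} (h : r ≤ c) : rowf (qseq c + r) = r := by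
  have h1 := eq_add (qseq c + r)
  rw [col_eq h] at h1
  omega

lemma col_mono : Monotone col := by
  intro x y h
  by_contra hc
  push Not at hc
  have := qseq_mono (show col y + 1 ≤ col x from hc)
  have h1 := qseq_col_le x
  have h2 := lt_qseq_col y
  omega

lemma qseq_lt_two_pow (c : ℕ) : qseq c < 2 ^ c := by
  have key : ∀ c, qseq c < 2 ^ c ∧ c + 1 ≤ 2 ^ c := by
    intro c
    induction c with
    | zero => simp [qseq_zero]
    | succ k ih => rw [qseq_succ, pow_succ]; omega
  exact (key c).1

lemma qseq_bound {M : ℕ} (h : 4 ≤ M) : qseq (M + 1) ≤ 2 ^ M ∧ M + 2 ≤ 2 ^ M := by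
  induction M, h using Nat.le_induction with
  | base => decide
  | succ k hk ih => rw [qseq_succ, pow_succ]; omega

/-- Successor inside a column, or beginning of a new column. -/
lemma succ_cases (y : ℕ) :
    (col (y + 1) = col y ∧ rowf (y + 1) = rowf y + 1) ∨
    (col (y + 1) = col y + 1 ∧ rowf (y + 1) = 0 ∧ rowf y = col y) := by
  have h := eq_add y
  have hr := rowf_le y
  rcases Nat.lt_or_ge (rowf y) (col y) with h1 | h1
  · left
    have e : y + 1 = qseq (col y) + (rowf y + 1) := by omega
    exact ⟨by rw [e, col_eq h1], by rw [e, row_eq h1]⟩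
  · right
    have e : y + 1 = qseq (col y + 1) + 0 := by rw [qseq_succ]; omega
    refine ⟨by rw [e, col_eq (Nat.zero_le _)], by rw [e, row_eq (Nat.zero_le _)], by omega⟩

/-- A point of an earlier column (or lower in the same column) is smaller. -/
lemma point_le {c r x : ℕ} (hr : r ≤ c) (h : c < col x) : qseq c + r ≤ x := by
  have h1 := qseq_col_le x
  have h2 := qseq_mono (show c + 1 ≤ col x from h)
  rw [qseq_succ] at h2
  omega

lemma exists_point {n c r : ℕ} (hr : r ≤ c) (h : qseq c + r ≤ n) :
    ∃ w : Fin (n + 1), col w = c ∧ rowf w = r :=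
  ⟨⟨qseq c + r, by omega⟩, col_eq hr, row_eq hr⟩

lemma lt_iff (x y : ℕ) : x < y ↔ col x < col y ∨ (col x = col y ∧ rowf x < rowf y) := by
  have hx := eq_add x
  have hy := eq_add y
  rcases lt_trichotomy (col x) (col y) with h | h | h
  · have := point_le (rowf_le x) h
    constructor
    · intro; exact Or.inl h
    · intro
      rcases Nat.lt_or_ge x y with h' | h'
      · exact h'
      · have := col_mono h'; omega
  · rw [h] at hx; omega
  · have h2 : y < x := by
      rcases Nat.lt_or_ge y x with h' | h'
      · exact h'
      · have := col_mono h'; omega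
    omega

lemma row_col_inj {x y : ℕ} (h1 : col x = col y) (h2 : rowf x = rowf y) : x = y := by
  rw [eq_add x, eq_add y, h1, h2]

/-! ### Carry look-ahead -/

lemma testBit_add_carry (x y i : ℕ) :
    (x + y).testBit i = ((x.testBit i ^^ y.testBit i) ^^
      decide (2 ^ i ≤ x % 2 ^ i + y % 2 ^ i)) := by
  simp only [Nat.testBit_eq_decide_div_mod_eq]
  rw [Nat.add_div (Nat.two_pow_pos i)]
  have hx := Nat.mod_two_eq_zero_or_one (x / 2 ^ i)
  have hy := Nat.mod_two_eq_zero_or_one (y / 2 ^ i)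
  by_cases h : 2 ^ i ≤ x % 2 ^ i + y % 2 ^ i <;> rcases hx with hx | hx <;>
    rcases hy with hy | hy <;> simp [h, hx, hy, Nat.add_mod]

lemma carry_iff (x y i : ℕ) :
    2 ^ i ≤ x % 2 ^ i + y % 2 ^ i ↔
      ∃ j < i, x.testBit j = true ∧ y.testBit j = true ∧
        ∀ k, j < k → k < i → (x.testBit k = true ∨ y.testBit k = true) := by
  induction i with
  | zero => simp [Nat.mod_one]
  | succ i ih =>
    have hstep : (2 ^ (i+1) ≤ x % 2 ^ (i+1) + y % 2 ^ (i+1)) ↔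
        ((x.testBit i = true ∧ y.testBit i = true) ∨
          ((x.testBit i = true ∨ y.testBit i = true) ∧ 2 ^ i ≤ x % 2 ^ i + y % 2 ^ i)) := by
      simp only [Nat.testBit_eq_decide_div_mod_eq, decide_eq_true_eq]
      rw [Nat.mod_pow_succ, Nat.mod_pow_succ, pow_succ]
      have hx := Nat.mod_lt x (Nat.two_pow_pos i)
      have hy := Nat.mod_lt y (Nat.two_pow_pos i)
      rcases Nat.mod_two_eq_zero_or_one (x / 2 ^ i) with h1 | h1 <;>
        rcases Nat.mod_two_eq_zero_or_one (y / 2 ^ i) with h2 | h2 <;>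
        rw [h1, h2] <;> clear h1 h2 ih <;>
        generalize x % 2 ^ i = a at * <;> generalize y % 2 ^ i = b at * <;>
        generalize 2 ^ i = p at * <;> simp <;> omega
    rw [hstep, ih]
    constructor
    · rintro (⟨h1, h2⟩ | ⟨h, j, hj, h1, h2, h3⟩)
      · exact ⟨i, by omega, h1, h2, fun k hk hk' => by omega⟩
      · refine ⟨j, by omega, h1, h2, fun k hk hk' => ?_⟩
        rcases Nat.lt_or_ge k i with hki | hki
        · exact h3 k hk hki
        · obtain rfl : k = i := by omega
          exact h
    · rintro ⟨j, hj, h1, h2, h3⟩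
      rcases Nat.lt_or_ge j i with hji | hji
      · exact Or.inr ⟨h3 i hji (by omega), j, hji, h1, h2, fun k hk hk' => h3 k hk (by omega)⟩
      · obtain rfl : j = i := by omega
        exact Or.inl ⟨h1, h2⟩

/-! ### Uniform definability -/

/-- A family of relations on the prefixes is uniformly definable. -/
def UD {α : Type} (R : ∀ n : ℕ, (α → Fin (n + 1)) → Prop) : Prop :=
  ∃ φ : L4.Formula α, ∀ (n : ℕ) (v : α → Fin (n + 1)),
    (letI := struct4 n; φ.Realize v) ↔ R n v

namespace UD

variable {α : Type} {R S : ∀ n : ℕ, (α → Fin (n + 1)) → Prop}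

lemma congr (h : UD R) (e : ∀ n v, R n v ↔ S n v) : UD S := by
  obtain ⟨φ, hφ⟩ := h
  exact ⟨φ, fun n v => (hφ n v).trans (e n v)⟩

lemma not (h : UD R) : UD (fun n v => ¬ R n v) := by
  obtain ⟨φ, hφ⟩ := h
  refine ⟨φ.not, fun n v => ?_⟩
  letI := struct4 n
  exact Formula.realize_not.trans (not_congr (hφ n v))

lemma and (h : UD R) (h' : UD S) : UD (fun n v => R n v ∧ S n v) := by
  obtain ⟨φ, hφ⟩ := h
  obtain ⟨ψ, hψ⟩ := h'
  refine ⟨φ ⊓ ψ, fun n v => ?_⟩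
  letI := struct4 n
  exact Formula.realize_inf.trans (and_congr (hφ n v) (hψ n v))

lemma or (h : UD R) (h' : UD S) : UD (fun n v => R n v ∨ S n v) :=
  ((h.not.and h'.not).not).congr fun n v => by tauto

lemma imp (h : UD R) (h' : UD S) : UD (fun n v => R n v → S n v) :=
  ((h.and h'.not).not).congr fun n v => by tauto

lemma iff (h : UD R) (h' : UD S) : UD (fun n v => R n v ↔ S n v) :=
  ((h.imp h').and (h'.imp h)).congr fun n v => by tauto

lemma ex {S : ∀ n : ℕ, (α → Fin (n + 1)) → Fin (n + 1) → Prop}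
    (h : UD (α := α ⊕ Unit) (fun n v => S n (fun a => v (Sum.inl a)) (v (Sum.inr ())))) :
    UD (fun n v => ∃ x, S n v x) := by
  obtain ⟨φ, hφ⟩ := h
  refine ⟨φ.iExs Unit, fun n v => ?_⟩
  letI := struct4 n
  refine (Formula.realize_iExs).trans ?_
  constructor
  · rintro ⟨i, hi⟩
    exact ⟨i (), (hφ n _).1 hi⟩
  · rintro ⟨x, hx⟩
    exact ⟨fun _ => x, (hφ n _).2 hx⟩

lemma all {S : ∀ n : ℕ, (α → Fin (n + 1)) → Fin (n + 1) → Prop}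
    (h : UD (α := α ⊕ Unit) (fun n v => S n (fun a => v (Sum.inl a)) (v (Sum.inr ())))) :
    UD (fun n v => ∀ x, S n v x) := by
  have := (ex (S := fun n v x => ¬ S n v x) h.not).not
  exact this.congr fun n v => by simp

lemma const (p : Prop) : UD (α := α) (fun _ _ => p) := by
  by_cases hp : p
  · exact ⟨⊤, fun n v => by simp [hp]⟩
  · exact ⟨⊥, fun n v => by simp [hp]⟩

lemma bex (K : ℕ) {R : ℕ → ∀ n : ℕ, (α → Fin (n + 1)) → Prop} (h : ∀ k, UD (R k)) :
    UD (fun n v => ∃ k < K, R k n v) := by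
  induction K with
  | zero => exact (const False).congr fun n v => by simp
  | succ K ih =>
    refine (ih.or (h K)).congr fun n v => ?_
    constructor
    · rintro (⟨k, hk, h⟩ | h)
      · exact ⟨k, by omega, h⟩
      · exact ⟨K, by omega, h⟩
    · rintro ⟨k, hk, h⟩
      rcases Nat.lt_or_ge k K with h' | h'
      · exact Or.inl ⟨k, h', h⟩
      · obtain rfl : k = K := by omega
        exact Or.inr h

lemma lt (i j : α) : UD (fun n v => (v i : ℕ) < (v j : ℕ)) :=
  ⟨Relations.formula (L := L4) (n := 2) Rel4.lt ![Term.var i, Term.var j], fun n v => by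
    letI := struct4 n
    exact Formula.realize_rel⟩

lemma ordc (i j : α) : UD (fun n v => _root_.ordc (v i : ℕ) (v j : ℕ)) :=
  ⟨Relations.formula (L := L4) (n := 2) Rel4.ordc ![Term.var i, Term.var j], fun n v => by
    letI := struct4 n
    exact Formula.realize_rel⟩

lemma cpred (i : α) : UD (fun n v => Cpred (v i : ℕ)) :=
  ⟨Relations.formula (L := L4) (n := 1) Rel4.C ![Term.var i], fun n v => by
    letI := struct4 n
    exact Formula.realize_rel⟩

lemma qpred (i : α) : UD (fun n v => Qpred (v i : ℕ)) :=
  ⟨Relations.formula (L := L4) (n := 1) Rel4.Q ![Term.var i], fun n v => by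
    letI := struct4 n
    exact Formula.realize_rel⟩

lemma eq (i j : α) : UD (fun n v => (v i : ℕ) = (v j : ℕ)) :=
  ((lt i j).not.and (lt j i).not).congr fun n v => by omega

/-- `v i + 1 = v j`. -/
lemma succ (i j : α) : UD (fun n v => (v i : ℕ) + 1 = (v j : ℕ)) := by
  have h : UD (fun n (v : α → Fin (n + 1)) => (v i : ℕ) < (v j : ℕ) ∧
      ¬ ∃ z : Fin (n + 1), (v i : ℕ) < (z : ℕ) ∧ (z : ℕ) < (v j : ℕ)) :=
    (lt i j).and (ex ((lt _ _).and (lt _ _))).not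
  refine h.congr fun n v => ?_
  constructor
  · rintro ⟨h1, h2⟩
    by_contra h3
    exact h2 ⟨⟨v i + 1, by omega⟩, by simp, by simp; omega⟩
  · intro h
    refine ⟨by omega, ?_⟩
    rintro ⟨z, h1, h2⟩
    omega

lemma eq_const (k : ℕ) (i : α) : UD (fun n v => (v i : ℕ) = k) := by
  induction k generalizing α with
  | zero =>
    have h : UD (fun n (v : α → Fin (n + 1)) => ¬ ∃ z : Fin (n + 1), (z : ℕ) < (v i : ℕ)) :=
      (ex (lt _ _)).not
    refine h.congr fun n v => ?_
    constructor
    · intro h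
      by_contra h'
      exact h ⟨⟨0, by omega⟩, Nat.pos_of_ne_zero h'⟩
    · rintro h ⟨z, hz⟩
      omega
  | succ k ih =>
    have h : UD (fun n (v : α → Fin (n + 1)) =>
        ∃ z : Fin (n + 1), (z : ℕ) = k ∧ (z : ℕ) + 1 = (v i : ℕ)) :=
      ex ((ih _).and (succ _ _))
    refine h.congr fun n v => ?_
    constructor
    · rintro ⟨z, h1, h2⟩
      omega
    · intro h
      exact ⟨⟨k, by omega⟩, rfl, h.symm⟩

/-- Being the bottom of a column. -/
lemma start (i : α) : UD (fun n v => rowf (v i : ℕ) = 0) := by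
  have h : UD (fun n (v : α → Fin (n + 1)) => (v i : ℕ) = 0 ∨ (v i : ℕ) = 1 ∨
      ∃ z : Fin (n + 1), (z : ℕ) + 1 = (v i : ℕ) ∧ _root_.ordc (v i : ℕ) (z : ℕ)) :=
    (eq_const 0 i).or ((eq_const 1 i).or (ex ((succ _ _).and (ordc _ _))))
  refine h.congr fun n v => ?_
  constructor
  · rintro (h | h | ⟨z, h1, h2⟩)
    · rw [h]; rfl
    · rw [h]; exact row_eq (c := 1) (r := 0) (by omega)
    · rw [← h1] at h2 ⊢
      unfold _root_.ordc at h2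
      have := succ_cases z
      omega
  · intro h
    rcases Nat.lt_or_ge (v i : ℕ) 2 with h0 | h0
    · omega
    · right; right
      obtain ⟨y, hy⟩ : ∃ y, (v i : ℕ) = y + 1 := ⟨v i - 1, by omega⟩
      refine ⟨⟨y, by omega⟩, hy.symm, ?_⟩
      rw [hy] at h ⊢
      left
      change rowf (y + 1) < rowf y
      have h1 := succ_cases y
      have h2 := eq_add y
      rcases Nat.eq_zero_or_pos (col y) with h3 | h3
      · rw [h3, qseq_zero] at h2
        have := rowf_le y
        omega
      · omega

/-- Strictly earlier column. -/
lemma clt (i j : α) : UD (fun n v => col (v i : ℕ) < col (v j : ℕ)) := by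
  have h : UD (fun n (v : α → Fin (n + 1)) =>
      ∃ z : Fin (n + 1), rowf (z : ℕ) = 0 ∧ (v i : ℕ) < (z : ℕ) ∧ ¬ ((v j : ℕ) < (z : ℕ))) :=
    ex ((start _).and ((lt _ _).and (lt _ _).not))
  refine h.congr fun n v => ?_
  constructor
  · rintro ⟨z, h1, h2, h3⟩
    rw [lt_iff] at h2 h3
    omega
  · intro h
    obtain ⟨w, hw, hw'⟩ := exists_point (n := n) (Nat.zero_le (col (v j : ℕ)))
      (by have := qseq_col_le (v j : ℕ); omega)
    refine ⟨w, hw', ?_, ?_⟩ <;> rw [lt_iff] <;> omega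

/-- Consecutive columns. -/
lemma csucc (i j : α) : UD (fun n v => col (v i : ℕ) + 1 = col (v j : ℕ)) := by
  have h : UD (fun n (v : α → Fin (n + 1)) => col (v i : ℕ) < col (v j : ℕ) ∧
      ¬ ∃ z : Fin (n + 1), col (v i : ℕ) < col (z : ℕ) ∧ col (z : ℕ) < col (v j : ℕ)) :=
    (clt _ _).and (ex ((clt _ _).and (clt _ _))).not
  refine h.congr fun n v => ?_
  constructor
  · rintro ⟨h1, h2⟩
    by_contra h3
    obtain ⟨w, hw, hw'⟩ := exists_point (n := n) (Nat.zero_le (col (v i : ℕ) + 1))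
      (by have := point_le (x := v j) (Nat.zero_le (col (v i : ℕ) + 1)) (by omega); omega)
    exact h2 ⟨w, by omega, by omega⟩
  · intro h
    refine ⟨by omega, ?_⟩
    rintro ⟨z, h1, h2⟩
    omega

/-- Same row, in a strictly later column. -/
lemma srow_lt (i j : α) :
    UD (fun n v => col (v i : ℕ) < col (v j : ℕ) ∧ rowf (v i : ℕ) = rowf (v j : ℕ)) := by
  have h : UD (fun n (v : α → Fin (n + 1)) => col (v i : ℕ) < col (v j : ℕ) ∧
      _root_.ordc (v i : ℕ) (v j : ℕ) ∧ (rowf (v j : ℕ) = 0 ∨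
      ∃ z : Fin (n + 1), (z : ℕ) + 1 = (v j : ℕ) ∧ ¬ _root_.ordc (v i : ℕ) (z : ℕ))) :=
    (clt _ _).and ((ordc _ _).and ((start _).or (ex ((succ _ _).and (ordc _ _).not))))
  refine h.congr fun n v => ?_
  unfold _root_.ordc
  constructor
  · rintro ⟨h1, h2, h3 | ⟨z, h3, h4⟩⟩
    · omega
    · rw [← h3] at h1 h2 ⊢
      have := succ_cases z
      omega
  · rintro ⟨h1, h2⟩
    refine ⟨h1, by omega, ?_⟩
    rcases Nat.eq_zero_or_pos (rowf (v j : ℕ)) with h3 | h3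
    · exact Or.inl h3
    · right
      obtain ⟨y, hy⟩ : ∃ y, (v j : ℕ) = y + 1 := by
        refine ⟨v j - 1, ?_⟩
        have := eq_add (v j)
        omega
      refine ⟨⟨y, by omega⟩, hy.symm, ?_⟩
      rw [hy] at h1 h2 h3
      change ¬ (rowf (v i) < rowf y ∨ rowf (v i) = rowf y ∧ col (v i) < col y)
      have := succ_cases y
      omega

/-- Same row. -/
lemma srow (i j : α) : UD (fun n v => rowf (v i : ℕ) = rowf (v j : ℕ)) := by
  refine ((eq i j).or ((srow_lt i j).or (srow_lt j i))).congr fun n v => ?_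
  constructor
  · rintro (h | h | h)
    · rw [h]
    · exact h.2
    · exact h.2.symm
  · intro h
    rcases lt_trichotomy (col (v i : ℕ)) (col (v j : ℕ)) with h1 | h1 | h1
    · exact Or.inr (Or.inl ⟨h1, h⟩)
    · exact Or.inl (row_col_inj h1 h)
    · exact Or.inr (Or.inr ⟨h1, h.symm⟩)

/-- Strictly lower row. -/
lemma rlt (i j : α) : UD (fun n v => rowf (v i : ℕ) < rowf (v j : ℕ)) :=
  ((ordc i j).and (srow i j).not).congr fun n v => by unfold _root_.ordc; omega

/-- Diagonal elements. -/
lemma diag (i : α) : UD (fun n v => rowf (v i : ℕ) = col (v i : ℕ)) := by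
  have h : UD (fun n (v : α → Fin (n + 1)) => ¬ ∃ z : Fin (n + 1),
      rowf (z : ℕ) = rowf (v i : ℕ) ∧ (z : ℕ) < (v i : ℕ)) :=
    (ex ((srow _ _).and (lt _ _))).not
  refine h.congr fun n v => ?_
  have hr := rowf_le (v i)
  constructor
  · intro h
    by_contra h'
    have hp := point_le (x := v i) (le_refl (rowf (v i : ℕ))) (by omega)
    obtain ⟨w, hw, hw'⟩ := exists_point (n := n) (le_refl (rowf (v i : ℕ))) (by omega)
    refine h ⟨w, hw', ?_⟩
    rw [lt_iff]
    omega
  · rintro h ⟨z, h1, h2⟩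
    rw [lt_iff] at h2
    have := rowf_le z
    omega

/-- Bits of the column number. -/
lemma cbit (i j : α) : UD (fun n v => (col (v i : ℕ)).testBit (rowf (v j : ℕ)) = true) := by
  have h : UD (fun n (v : α → Fin (n + 1)) => ∃ w : Fin (n + 1),
      col (w : ℕ) + 1 = col (v i : ℕ) ∧ rowf (w : ℕ) = rowf (v j : ℕ) ∧ Cpred (w : ℕ)) :=
    ex ((csucc _ _).and ((srow _ _).and (cpred _)))
  refine h.congr fun n v => ?_
  unfold Cpred
  constructor
  · rintro ⟨w, h1, h2, h3⟩
    rwa [h1, h2] at h3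
  · intro h
    have h1 := Nat.ge_two_pow_of_testBit h
    have h2 : rowf (v j : ℕ) < col (v i : ℕ) := lt_of_lt_of_le Nat.lt_two_pow_self h1
    obtain ⟨c, hc⟩ : ∃ c, col (v i : ℕ) = c + 1 := ⟨col (v i) - 1, by omega⟩
    have hp := point_le (x := v i) (show rowf (v j : ℕ) ≤ c by omega) (by omega)
    obtain ⟨w, hw, hw'⟩ := exists_point (n := n) (show rowf (v j : ℕ) ≤ c by omega) (by omega)
    exact ⟨w, by omega, hw', by rw [hw, hw', ← hc]; exact h⟩

/-- Bits of the bottom of the column. -/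
lemma qbit (i j : α) : UD (fun n v => (qf (v i : ℕ)).testBit (rowf (v j : ℕ)) = true) := by
  have h : UD (fun n (v : α → Fin (n + 1)) => ∃ w : Fin (n + 1),
      col (w : ℕ) + 1 = col (v i : ℕ) ∧ rowf (w : ℕ) = rowf (v j : ℕ) ∧ Qpred (w : ℕ)) :=
    ex ((csucc _ _).and ((srow _ _).and (qpred _)))
  refine h.congr fun n v => ?_
  unfold Qpred qf
  constructor
  · rintro ⟨w, h1, h2, h3⟩
    rwa [h1, h2] at h3
  · intro h
    have h1 := Nat.ge_two_pow_of_testBit h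
    have h2 : rowf (v j : ℕ) < col (v i : ℕ) :=
      (Nat.pow_lt_pow_iff_right (by norm_num : 1 < 2)).1 (lt_of_le_of_lt h1 (qseq_lt_two_pow _))
    obtain ⟨c, hc⟩ : ∃ c, col (v i : ℕ) = c + 1 := ⟨col (v i) - 1, by omega⟩
    have hp := point_le (x := v i) (show rowf (v j : ℕ) ≤ c by omega) (by omega)
    obtain ⟨w, hw, hw'⟩ := exists_point (n := n) (show rowf (v j : ℕ) ≤ c by omega) (by omega)
    exact ⟨w, by omega, hw', by rw [hw, hw', ← hc]; exact h⟩

lemma diag_point_le (x : ℕ) : qseq (rowf x) + rowf x ≤ x := by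
  have h1 := eq_add x
  have := qseq_mono (rowf_le x)
  omega

/-- Bits of the row number. -/
lemma rbit (i j : α) : UD (fun n v => (rowf (v i : ℕ)).testBit (rowf (v j : ℕ)) = true) := by
  have h : UD (fun n (v : α → Fin (n + 1)) => ∃ d : Fin (n + 1),
      rowf (d : ℕ) = col (d : ℕ) ∧ rowf (d : ℕ) = rowf (v i : ℕ) ∧
      (col (d : ℕ)).testBit (rowf (v j : ℕ)) = true) :=
    ex ((diag _).and ((srow _ _).and (cbit _ _)))
  refine h.congr fun n v => ?_
  constructor
  · rintro ⟨d, h1, h2, h3⟩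
    rwa [← h1, h2] at h3
  · intro h
    obtain ⟨w, hw, hw'⟩ := exists_point (n := n) (le_refl (rowf (v i : ℕ)))
      (by have := diag_point_le (v i); omega)
    exact ⟨w, by omega, hw', by rw [hw]; exact h⟩

lemma exists_lower {n : ℕ} (z : Fin (n + 1)) {k : ℕ} (h : k ≤ rowf z) :
    ∃ w : Fin (n + 1), rowf w = k := by
  have h1 := eq_add z
  obtain ⟨w, _, hw⟩ := exists_point (n := n) (h.trans (rowf_le z)) (by omega)
  exact ⟨w, hw⟩

/-- Bits of an element, with the bit position given as a row. -/
lemma bitrow (i j : α) : UD (fun n v => (v i : ℕ).testBit (rowf (v j : ℕ)) = true) := by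
  have hc : UD (fun n (v : α → Fin (n + 1)) => ∃ z : Fin (n + 1),
      rowf (z : ℕ) < rowf (v j : ℕ) ∧ (qf (v i : ℕ)).testBit (rowf (z : ℕ)) = true ∧
      (rowf (v i : ℕ)).testBit (rowf (z : ℕ)) = true ∧
      ∀ y : Fin (n + 1), rowf (z : ℕ) < rowf (y : ℕ) → rowf (y : ℕ) < rowf (v j : ℕ) →
        ((qf (v i : ℕ)).testBit (rowf (y : ℕ)) = true ∨
          (rowf (v i : ℕ)).testBit (rowf (y : ℕ)) = true)) :=
    ex ((rlt _ _).and ((qbit _ _).and ((rbit _ _).and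
      (all ((rlt _ _).imp ((rlt _ _).imp ((qbit _ _).or (rbit _ _))))))))
  have hc' : UD (fun n (v : α → Fin (n + 1)) =>
      2 ^ (rowf (v j : ℕ)) ≤ qf (v i : ℕ) % 2 ^ (rowf (v j : ℕ)) +
        rowf (v i : ℕ) % 2 ^ (rowf (v j : ℕ))) := by
    refine hc.congr fun n v => ?_
    rw [carry_iff]
    constructor
    · rintro ⟨z, h1, h2, h3, h4⟩
      refine ⟨_, h1, h2, h3, fun k hk hk' => ?_⟩
      obtain ⟨y, rfl⟩ := exists_lower (v j) hk'.le
      exact h4 y hk hk'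
    · rintro ⟨k, h1, h2, h3, h4⟩
      obtain ⟨z, rfl⟩ := exists_lower (v j) h1.le
      exact ⟨z, h1, h2, h3, fun y hk hk' => h4 _ hk hk'⟩
  refine (((qbit i j).iff (rbit i j)).iff hc').congr fun n v => ?_
  have e : (v i : ℕ) = qf (v i) + rowf (v i) := eq_add (v i)
  conv_rhs => rw [e, testBit_add_carry]
  by_cases h : 2 ^ (rowf (v j : ℕ)) ≤ qf (v i : ℕ) % 2 ^ (rowf (v j : ℕ)) +
        rowf (v i : ℕ) % 2 ^ (rowf (v j : ℕ)) <;>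
    cases (qf (v i : ℕ)).testBit (rowf (v j : ℕ)) <;>
    cases (rowf (v i : ℕ)).testBit (rowf (v j : ℕ)) <;> simp [h]

/-- The column number agrees with an element on all available bits. -/
lemma agree (i j : α) : UD (fun n v => ∀ z : Fin (n + 1),
    (col (v i : ℕ)).testBit (rowf (z : ℕ)) = true ↔
      (v j : ℕ).testBit (rowf (z : ℕ)) = true) :=
  all ((cbit _ _).iff (bitrow _ _))

end UD

lemma agree_iff {n : ℕ} (hn : 16 ≤ n) (w b : Fin (n + 1)) :
    (∀ z : Fin (n + 1), (col (w : ℕ)).testBit (rowf (z : ℕ)) = true ↔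
      (b : ℕ).testBit (rowf (z : ℕ)) = true) ↔ col (w : ℕ) = b := by
  constructor
  swap
  · intro h z; rw [h]
  intro h
  have h5 : 5 ≤ col n := by
    have : col 16 = 5 := col_eq (c := 5) (r := 1) (by omega)
    rw [← this]
    exact col_mono hn
  have hlt : ∀ x ≤ n, x < 2 ^ col n := fun x hx =>
    lt_of_le_of_lt hx ((lt_qseq_col n).trans_le (qseq_bound (by omega)).1)
  apply Nat.eq_of_testBit_eq
  intro k
  rcases Nat.lt_or_ge k (col n) with hk | hk
  · have hp := point_le (show k ≤ k from le_rfl) hk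
    obtain ⟨z, _, hz⟩ := exists_point (n := n) (le_refl k) hp
    have := h z
    rw [hz] at this
    exact Bool.eq_iff_iff.2 this
  · have hle : 2 ^ col n ≤ 2 ^ k := Nat.pow_le_pow_right (by norm_num) hk
    have hw : col (w : ℕ) ≤ n := by
      have := le_qseq (col (w : ℕ))
      have := qseq_col_le w
      omega
    rw [Nat.testBit_eq_false_of_lt ((hlt _ hw).trans_le hle),
      Nat.testBit_eq_false_of_lt ((hlt _ (by omega : (b : ℕ) ≤ n)).trans_le hle)]

lemma diag_le {a b : ℕ} (ha : 16 ≤ a) (h : a.testBit b = true) : qseq b + b ≤ a := by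
  have h1 := Nat.ge_two_pow_of_testBit h
  rcases Nat.lt_or_ge b 4 with hb | hb
  · have h2 : qseq b + b ≤ qseq 4 + 4 := by
      have := qseq_mono hb.le
      omega
    have h3 : qseq 4 = 10 := rfl
    omega
  · have h2 := (qseq_bound hb).1
    rw [qseq_succ] at h2
    omega

lemma ud_bit : UD (α := Fin 2) (fun n v => (v 0 : ℕ).testBit (v 1 : ℕ) = true) := by
  have hsmall : UD (α := Fin 2) (fun n v => ∃ k < 16, (v 0 : ℕ) = k ∧
      ∃ l < 16, (v 1 : ℕ) = l ∧ k.testBit l = true) :=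
    UD.bex 16 fun k => (UD.eq_const k 0).and
      (UD.bex 16 fun l => (UD.eq_const l 1).and (UD.const _))
  have hbd : UD (α := Fin 2) (fun n v => ∃ k < 16, (v 0 : ℕ) = k) :=
    UD.bex 16 fun k => UD.eq_const k 0
  have hbig : UD (α := Fin 2) (fun n v => ∃ d : Fin (n + 1), rowf (d : ℕ) = col (d : ℕ) ∧
      (∀ z : Fin (n + 1), (col (d : ℕ)).testBit (rowf (z : ℕ)) = true ↔
        (v 1 : ℕ).testBit (rowf (z : ℕ)) = true) ∧
      (v 0 : ℕ).testBit (rowf (d : ℕ)) = true) :=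
    UD.ex ((UD.diag _).and ((UD.agree _ _).and (UD.bitrow _ _)))
  refine (hsmall.or (hbd.not.and hbig)).congr fun n v => ?_
  constructor
  · rintro (⟨k, hk, h1, l, hl, h2, h3⟩ | ⟨h1, d, h2, h3, h4⟩)
    · rw [h1, h2]; exact h3
    · have ha : 16 ≤ (v 0 : ℕ) := by
        by_contra hc
        exact h1 ⟨_, by omega, rfl⟩
      rw [agree_iff (by omega)] at h3
      rwa [h2, h3] at h4
  · intro h
    rcases Nat.lt_or_ge (v 0 : ℕ) 16 with ha | ha
    · left
      have h1 := Nat.ge_two_pow_of_testBit h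
      have h2 : (v 1 : ℕ) < 2 ^ (v 1 : ℕ) := Nat.lt_two_pow_self
      exact ⟨_, ha, rfl, _, by omega, rfl, h⟩
    · right
      refine ⟨by rintro ⟨k, hk, h1⟩; omega, ?_⟩
      have hp := diag_le ha h
      obtain ⟨d, hd, hd'⟩ := exists_point (n := n) (le_refl (v 1 : ℕ)) (by omega)
      exact ⟨d, by omega, (agree_iff (by omega) d (v 1)).2 hd, by rw [hd']; exact h⟩

/-- Theorem 3.1: there is an FO(<,◁,C,Q)-formula defining the `Bit`
predicate in every finite prefix structure `({0,...,n}, <, ◁, C, Q)`. -/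
theorem lt_ordc_C_Q_define_Bit :
    ∃ φBit : L4.Formula (Fin 2),
      ∀ n : ℕ,
        letI := struct4 n
        ∀ a b : Fin (n + 1),
          φBit.Realize ![a, b] ↔ Nat.testBit (a : ℕ) (b : ℕ) = true := by
  obtain ⟨φ, hφ⟩ := ud_bit
  exact ⟨φ, fun n a b => hφ n ![a, b]⟩
end

section
/- There is a first-order formula φ_r(x,y) over the language with binary relation symbols for < and ◁ and unary relation symbols for C and Q such that for every n ∈ ℕ and all a,b ∈ {0,...,n}, the finite prefix structure ({0,...,n}, <, ◁, C, Q) satisfies φ_r(a,b) iff r(a) = b. -/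
open FirstOrder Language

namespace RowDef

/-! ### Coordinates -/

lemma qseq_succ (i : ℕ) : qseq (i + 1) = qseq i + (i + 1) := by
  unfold qseq
  rw [show (i + 1) * (i + 1 + 1) = i * (i + 1) + (i + 1) * 2 by ring,
    Nat.add_mul_div_right _ _ (by norm_num)]

lemma qseq_zero : qseq 0 = 0 := rfl

lemma qseq_mono : Monotone qseq :=
  monotone_nat_of_le_succ (fun i => by rw [qseq_succ]; omega)

lemma le_qseq (i : ℕ) : i ≤ qseq i := by
  induction i with
  | zero => simp
  | succ k ih => rw [qseq_succ]; omega

lemma qseq_lt {i j : ℕ} (h : i < j) : qseq i + i < qseq j := by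
  have := qseq_mono (show i + 1 ≤ j from h)
  rw [qseq_succ] at this; omega

lemma qseq_lt_two_pow (i : ℕ) : qseq i < 2 ^ i := by
  induction i with
  | zero => simp [qseq_zero]
  | succ k ih =>
    rw [qseq_succ, pow_succ]
    have : k + 1 ≤ 2 ^ k := Nat.lt_two_pow_self
    omega

lemma qf_le (x : ℕ) : qseq (col x) ≤ x := by
  unfold col
  exact Nat.findGreatest_spec (P := fun i => qseq i ≤ x) (m := 0) (Nat.zero_le _) (by simp [qseq_zero])

lemma eq_add (x : ℕ) : x = qseq (col x) + rowf x := by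
  have := qf_le x
  unfold rowf qf; omega

lemma row_le (x : ℕ) : rowf x ≤ col x := by
  by_contra h
  have h1 := eq_add x
  have h2 : qseq (col x + 1) ≤ x := by rw [qseq_succ]; omega
  have h3 : col x + 1 ≤ col x := by
    conv_rhs => unfold col
    exact Nat.le_findGreatest ((le_qseq _).trans h2) h2
  omega

lemma coord {x c r : ℕ} (h : r ≤ c) (hx : x = qseq c + r) : col x = c ∧ rowf x = r := by
  have h1 := eq_add x
  have h2 := row_le x
  have : col x = c := by
    rcases lt_trichotomy (col x) c with h3 | h3 | h3
    · have := qseq_lt h3; omega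
    · exact h3
    · have := qseq_lt h3; omega
  rw [this] at h1
  exact ⟨this, by omega⟩

lemma col_mono {x y : ℕ} (h : x ≤ y) : col x ≤ col y := by
  by_contra h3
  have := qseq_lt (not_le.1 h3)
  have := eq_add x; have := eq_add y; have := row_le y
  omega

lemma ext_iff' {x y : ℕ} : x = y ↔ col x = col y ∧ rowf x = rowf y :=
  ⟨fun h => by simp [h], fun h => by rw [eq_add x, eq_add y, h.1, h.2]⟩

/-- A point with smaller column is smaller. -/
lemma lt_of_col {x y : ℕ} (h : col x < col y) : x < y := by
  by_contra h3
  have := col_mono (not_lt.1 h3)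
  omega

lemma le_of_coord {x y : ℕ} (h : col x ≤ col y) (h' : rowf x ≤ rowf y) : x ≤ y := by
  have := eq_add x; have := eq_add y; have := qseq_mono h
  omega

/-- Existence of points below a given one. -/
lemma exists_pt {y c r : ℕ} (h : r ≤ c) (hy : c < col y ∨ (c = col y ∧ r ≤ rowf y)) :
    ∃ z, z ≤ y ∧ col z = c ∧ rowf z = r := by
  obtain ⟨h1, h2⟩ := coord h rfl
  refine ⟨qseq c + r, ?_, h1, h2⟩
  rcases hy with hy | ⟨hy, hr⟩
  · exact (lt_of_col (by omega)).le
  · exact le_of_coord (by omega) (by omega)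

lemma exists_fin {n c r : ℕ} (y : Fin (n + 1)) (h : r ≤ c)
    (hy : c < col y ∨ (c = col y ∧ r ≤ rowf y)) :
    ∃ z : Fin (n + 1), col z = c ∧ rowf z = r := by
  obtain ⟨z, hz, h1, h2⟩ := exists_pt h hy
  exact ⟨⟨z, by omega⟩, h1, h2⟩

/-- Coordinates of the successor. -/
lemma succ_coord (x : ℕ) : (rowf x < col x ∧ col (x + 1) = col x ∧ rowf (x + 1) = rowf x + 1) ∨
    (rowf x = col x ∧ col (x + 1) = col x + 1 ∧ rowf (x + 1) = 0) := by
  have h1 := eq_add x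
  have h2 := row_le x
  rcases h2.lt_or_eq with h | h
  · left
    have := coord (x := x + 1) (c := col x) (r := rowf x + 1) h (by omega)
    exact ⟨h, this⟩
  · right
    have := coord (x := x + 1) (c := col x + 1) (r := 0) (Nat.zero_le _)
      (by rw [qseq_succ]; omega)
    exact ⟨h, this⟩

/-! ### Uniform definability -/

def D {α : Type} (P : ∀ n : ℕ, (α → Fin (n + 1)) → Prop) : Prop :=
  ∃ φ : L4.Formula α, ∀ (n : ℕ) (v : α → Fin (n + 1)),
    (letI := struct4 n; φ.Realize v) ↔ P n v

def D1 (R : ℕ → Prop) : Prop := D (α := Fin 1) (fun _ v => R (v 0))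
def D2 (R : ℕ → ℕ → Prop) : Prop := D (α := Fin 2) (fun _ v => R (v 0) (v 1))

section
variable {α : Type}

lemma D.congr {P P' : ∀ n : ℕ, (α → Fin (n + 1)) → Prop} (h : D P)
    (e : ∀ n v, P n v ↔ P' n v) : D P' := by
  obtain ⟨φ, hφ⟩ := h
  exact ⟨φ, fun n v => (hφ n v).trans (e n v)⟩

lemma D.not {P : ∀ n : ℕ, (α → Fin (n + 1)) → Prop} (h : D P) : D (fun n v => ¬ P n v) := by
  obtain ⟨φ, hφ⟩ := h
  refine ⟨φ.not, fun n v => ?_⟩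
  let _ := struct4 n
  exact Formula.realize_not.trans (not_congr (hφ n v))

lemma D.and {P P' : ∀ n : ℕ, (α → Fin (n + 1)) → Prop} (h : D P) (h' : D P') :
    D (fun n v => P n v ∧ P' n v) := by
  obtain ⟨φ, hφ⟩ := h
  obtain ⟨ψ, hψ⟩ := h'
  refine ⟨φ ⊓ ψ, fun n v => ?_⟩
  let _ := struct4 n
  exact Formula.realize_inf.trans (and_congr (hφ n v) (hψ n v))

lemma D.or {P P' : ∀ n : ℕ, (α → Fin (n + 1)) → Prop} (h : D P) (h' : D P') :
    D (fun n v => P n v ∨ P' n v) :=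
  (h.not.and h'.not).not.congr (fun n v => by tauto)

lemma D.imp {P P' : ∀ n : ℕ, (α → Fin (n + 1)) → Prop} (h : D P) (h' : D P') :
    D (fun n v => P n v → P' n v) :=
  (h.and h'.not).not.congr (fun n v => by tauto)

lemma D.iff {P P' : ∀ n : ℕ, (α → Fin (n + 1)) → Prop} (h : D P) (h' : D P') :
    D (fun n v => P n v ↔ P' n v) :=
  ((h.imp h').and (h'.imp h)).congr (fun n v => by tauto)

lemma D.ex {P : ∀ n : ℕ, (α → Fin (n + 1)) → Fin (n + 1) → Prop}
    (h : D (α := α ⊕ Unit) (fun n v => P n (fun a => v (Sum.inl a)) (v (Sum.inr ())))) :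
    D (fun n v => ∃ a, P n v a) := by
  obtain ⟨φ, hφ⟩ := h
  refine ⟨φ.iExs Unit, fun n v => ?_⟩
  let _ := struct4 n
  refine Formula.realize_iExs.trans ?_
  constructor
  · rintro ⟨i, hi⟩
    exact ⟨i (), (hφ n _).1 hi⟩
  · rintro ⟨a, ha⟩
    exact ⟨fun _ => a, (hφ n _).2 ha⟩

lemma D.all {P : ∀ n : ℕ, (α → Fin (n + 1)) → Fin (n + 1) → Prop}
    (h : D (α := α ⊕ Unit) (fun n v => P n (fun a => v (Sum.inl a)) (v (Sum.inr ())))) :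
    D (fun n v => ∀ a, P n v a) :=
  (D.ex (P := fun n v a => ¬ P n v a) h.not).not.congr (fun n v => by simp)

lemma D1.app {R : ℕ → Prop} (h : D1 R) (i : α) : D (fun n (v : α → Fin (n + 1)) => R (v i)) := by
  obtain ⟨φ, hφ⟩ := h
  refine ⟨φ.relabel ![i], fun n v => ?_⟩
  let _ := struct4 n
  exact Formula.realize_relabel.trans (hφ n _)

lemma D2.app {R : ℕ → ℕ → Prop} (h : D2 R) (i j : α) :
    D (fun n (v : α → Fin (n + 1)) => R (v i) (v j)) := by
  obtain ⟨φ, hφ⟩ := h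
  refine ⟨φ.relabel ![i, j], fun n v => ?_⟩
  let _ := struct4 n
  exact Formula.realize_relabel.trans (hφ n _)

end

lemma d_lt : D2 (fun x y => x < y) := by
  refine ⟨Relations.formula₂ (L := L4) (Rel4.lt : L4.Relations 2) (Term.var 0) (Term.var 1),
    fun n v => ?_⟩
  let _ := struct4 n
  exact Formula.realize_rel₂

lemma d_ordc : D2 ordc := by
  refine ⟨Relations.formula₂ (L := L4) (Rel4.ordc : L4.Relations 2) (Term.var 0) (Term.var 1),
    fun n v => ?_⟩
  let _ := struct4 n
  exact Formula.realize_rel₂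

lemma d_C : D1 Cpred := by
  refine ⟨Relations.formula₁ (L := L4) (Rel4.C : L4.Relations 1) (Term.var 0),
    fun n v => ?_⟩
  let _ := struct4 n
  exact Formula.realize_rel₁

lemma d_Q : D1 Qpred := by
  refine ⟨Relations.formula₁ (L := L4) (Rel4.Q : L4.Relations 1) (Term.var 0),
    fun n v => ?_⟩
  let _ := struct4 n
  exact Formula.realize_rel₁

lemma d_le : D2 (fun x y => x ≤ y) :=
  (d_lt.app 1 0).not.congr (fun n v => by simp)

lemma d_succ : D2 (fun x y => y = x + 1) := by
  refine D.congr (P := fun n v => (v 0 : ℕ) < v 1 ∧ ∀ z : Fin (n + 1), (v 0 : ℕ) < z → (v 1 : ℕ) ≤ z)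
    ((d_lt.app 0 1).and (D.all ((d_lt.app _ _).imp (d_le.app _ _)))) (fun n v => ?_)
  constructor
  · rintro ⟨h, h'⟩
    have := h' ⟨(v 0 : ℕ) + 1, by omega⟩ (by simp)
    simp at this
    omega
  · intro h
    exact ⟨by omega, fun z hz => by omega⟩

lemma d_zero : D1 (fun x => x = 0) := by
  refine D.congr (P := fun n v => ∀ z : Fin (n + 1), (v 0 : ℕ) ≤ z)
    (D.all (d_le.app _ _)) (fun n v => ?_)
  constructor
  · intro h
    have := h 0
    simpa using this
  · intro h z
    omega

lemma d_one : D1 (fun x => x = 1) := by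
  refine D.congr (P := fun n v => ∃ z : Fin (n + 1), (z : ℕ) = 0 ∧ (v 0 : ℕ) = z + 1)
    (D.ex ((d_zero.app _).and (d_succ.app _ _))) (fun n v => ?_)
  constructor
  · rintro ⟨z, h, h'⟩; omega
  · intro h
    exact ⟨0, by simp, by simpa using h⟩

lemma d_row0 : D1 (fun x => rowf x = 0) := by
  refine D.congr (P := fun n v => (v 0 : ℕ) = 1 ∨
      ∀ z : Fin (n + 1), (v 0 : ℕ) = z + 1 → ¬ ordc z (v 0))
    ((d_one.app _).or (D.all ((d_succ.app _ _).imp (d_ordc.app _ _).not))) (fun n v => ?_)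
  have h00 := coord (x := 0) (c := 0) (r := 0) le_rfl (by simp [qseq_zero])
  have h11 := coord (x := 1) (c := 1) (r := 0) (by simp) (by rfl)
  generalize v 0 = x
  constructor
  · rintro (h | h)
    · rw [h]; exact h11.2
    · by_contra h0
      have hx := eq_add x
      have := h ⟨x - 1, by omega⟩ (by simp; omega)
      apply this
      simp only
      have := succ_coord (x - 1)
      rw [show (x : ℕ) - 1 + 1 = x by omega] at this
      left; omega
  · intro h
    by_cases hx : (x : ℕ) = 1
    · exact Or.inl hx
    · right
      rintro z hz (h1 | ⟨h1, h2⟩)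
      · omega
      · have := succ_coord z
        rw [← hz] at this
        have h3 : (z : ℕ) = 0 := ext_iff'.2 ⟨by omega, by omega⟩
        omega

lemma d_colLe : D2 (fun x y => col x ≤ col y) := by
  refine D.congr (P := fun n v => ∀ z : Fin (n + 1), rowf z = 0 → (v 1 : ℕ) < z → (v 0 : ℕ) < z)
    (D.all ((d_row0.app _).imp ((d_lt.app _ _).imp (d_lt.app _ _)))) (fun n v => ?_)
  generalize v 0 = x
  generalize v 1 = y
  constructor
  · intro h
    by_contra hc
    obtain ⟨z, h1, h2⟩ := exists_fin x (Nat.zero_le (col x)) (Or.inr ⟨rfl, Nat.zero_le _⟩)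
    have := h z h2 (lt_of_col (by omega))
    have := le_of_coord (x := z) (y := x) (by omega) (by omega)
    omega
  · intro h z hz hy
    by_contra hx
    have h1 := col_mono (not_lt.1 hx)
    have := le_of_coord (x := z) (y := y) (by omega) (by omega)
    omega

lemma d_colLt : D2 (fun x y => col x < col y) :=
  (d_colLe.app 1 0).not.congr (fun n v => by simp)

lemma d_rowLt : D2 (fun x y => rowf x < rowf y) := by
  refine D.congr (P := fun n v => (col (v 1) ≤ col (v 0) ∧ ordc (v 0) (v 1)) ∨
      (col (v 0) < col (v 1) ∧ ¬ rowf (v 1) = 0 ∧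
        ∃ z : Fin (n + 1), (v 1 : ℕ) = z + 1 ∧ ordc (v 0) z))
    (((d_colLe.app _ _).and (d_ordc.app _ _)).or ((d_colLt.app _ _).and
      ((d_row0.app _).not.and (D.ex ((d_succ.app _ _).and (d_ordc.app _ _)))))) (fun n v => ?_)
  generalize v 0 = x
  generalize v 1 = y
  constructor
  · rintro (⟨h1, h2⟩ | ⟨h1, h2, z, h3, h4⟩)
    · unfold ordc at h2; omega
    · have := succ_coord z
      rw [← h3] at this
      unfold ordc at h4; omega
  · intro h
    by_cases hc : col y ≤ col x
    · exact Or.inl ⟨hc, Or.inl h⟩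
    · have hy := eq_add y
      have := succ_coord (y - 1)
      rw [show (y : ℕ) - 1 + 1 = y by omega] at this
      refine Or.inr ⟨by omega, by omega, ⟨y - 1, by omega⟩, by simp; omega, ?_⟩
      unfold ordc
      simp only
      omega

lemma d_rowEq : D2 (fun x y => rowf x = rowf y) :=
  ((d_rowLt.app 0 1).not.and (d_rowLt.app 1 0).not).congr (fun n v => by omega)

lemma d_colEq : D2 (fun x y => col x = col y) :=
  ((d_colLt.app 0 1).not.and (d_colLt.app 1 0).not).congr (fun n v => by omega)

lemma d_colLtRow : D2 (fun z x => col z < rowf x) := by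
  refine D.congr (P := fun n v => col (v 0) < col (v 1) ∧
      ∀ w : Fin (n + 1), col w = col (v 0) → rowf w < rowf (v 1))
    ((d_colLt.app _ _).and (D.all ((d_colEq.app _ _).imp (d_rowLt.app _ _)))) (fun n v => ?_)
  generalize v 0 = z
  generalize v 1 = x
  have hx := row_le x
  constructor
  · rintro ⟨h1, h2⟩
    obtain ⟨w, h3, h4⟩ := exists_fin x (le_refl (col z)) (Or.inl h1)
    have := h2 w h3
    omega
  · intro h
    refine ⟨by omega, fun w hw => ?_⟩
    have := row_le w
    omega

lemma d_colSuccRow : D2 (fun z x => col z + 1 = rowf x) := by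
  refine D.congr (P := fun n v => col (v 0) < rowf (v 1) ∧
      ∀ w : Fin (n + 1), col w < rowf (v 1) → col w ≤ col (v 0))
    ((d_colLtRow.app _ _).and (D.all ((d_colLtRow.app _ _).imp (d_colLe.app _ _))))
    (fun n v => ?_)
  generalize v 0 = z
  generalize v 1 = x
  have hx := row_le x
  constructor
  · rintro ⟨h1, h2⟩
    by_contra h
    obtain ⟨w, h3, h4⟩ := exists_fin x (Nat.zero_le (col z + 1)) (Or.inl (by omega))
    have := h2 w (by omega)
    omega
  · intro h
    exact ⟨by omega, fun w hw => by omega⟩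

lemma d_colSuccCol : D2 (fun z x => col z + 1 = col x) := by
  refine D.congr (P := fun n v => col (v 0) < col (v 1) ∧
      ∀ w : Fin (n + 1), col w < col (v 1) → col w ≤ col (v 0))
    ((d_colLt.app _ _).and (D.all ((d_colLt.app _ _).imp (d_colLe.app _ _))))
    (fun n v => ?_)
  generalize v 0 = z
  generalize v 1 = x
  constructor
  · rintro ⟨h1, h2⟩
    by_contra h
    obtain ⟨w, h3, h4⟩ := exists_fin x (Nat.zero_le (col z + 1)) (Or.inl (by omega))
    have := h2 w (by omega)
    omega
  · intro h
    exact ⟨by omega, fun w hw => by omega⟩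

lemma lt_of_testBit {m i k : ℕ} (h : m.testBit i = true) (hm : m < 2 ^ k) : i < k := by
  by_contra hk
  have : m < 2 ^ i := lt_of_lt_of_le hm (Nat.pow_le_pow_right (by norm_num) (not_lt.1 hk))
  rw [Nat.testBit_lt_two_pow this] at h
  simp at h

lemma d_bitRow : D2 (fun x i => (rowf x).testBit (rowf i) = true) := by
  refine D.congr (P := fun n v => ∃ z : Fin (n + 1), col z + 1 = rowf (v 0) ∧
      rowf z = rowf (v 1) ∧ Cpred z)
    (D.ex ((d_colSuccRow.app _ _).and ((d_rowEq.app _ _).and (d_C.app _)))) (fun n v => ?_)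
  generalize v 0 = x
  generalize v 1 = i
  have hx := row_le x
  constructor
  · rintro ⟨z, h1, h2, h3⟩
    unfold Cpred at h3
    rwa [h1, h2] at h3
  · intro h
    have h1 := lt_of_testBit h Nat.lt_two_pow_self
    obtain ⟨z, h3, h4⟩ := exists_fin x (c := rowf x - 1) (r := rowf i) (by omega)
      (Or.inl (by omega))
    have h5 : col z + 1 = rowf x := by omega
    refine ⟨z, h5, h4, ?_⟩
    unfold Cpred
    rwa [h5, h4]

lemma d_bitCol : D2 (fun x i => (qseq (col x)).testBit (rowf i) = true) := by
  refine D.congr (P := fun n v => ∃ z : Fin (n + 1), col z + 1 = col (v 0) ∧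
      rowf z = rowf (v 1) ∧ Qpred z)
    (D.ex ((d_colSuccCol.app _ _).and ((d_rowEq.app _ _).and (d_Q.app _)))) (fun n v => ?_)
  generalize v 0 = x
  generalize v 1 = i
  constructor
  · rintro ⟨z, h1, h2, h3⟩
    unfold Qpred at h3
    rwa [h1, h2] at h3
  · intro h
    have h1 := lt_of_testBit h (qseq_lt_two_pow _)
    obtain ⟨z, h3, h4⟩ := exists_fin x (c := col x - 1) (r := rowf i) (by omega)
      (Or.inl (by omega))
    have h5 : col z + 1 = col x := by omega
    refine ⟨z, h5, h4, ?_⟩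
    unfold Qpred
    rwa [h5, h4]

/-! ### Carry lookahead -/

/-- There is a carry into position `i` when adding `a` and `b`. -/
def Carry (a b i : ℕ) : Prop :=
  ∃ j < i, (a.testBit j = true ∧ b.testBit j = true) ∧
    ∀ k, j < k → k < i → (a.testBit k = true ∨ b.testBit k = true)

lemma carry_succ (a b i : ℕ) : Carry a b (i + 1) ↔
    (a.testBit i = true ∧ b.testBit i = true) ∨
      ((a.testBit i = true ∨ b.testBit i = true) ∧ Carry a b i) := by
  constructor
  · rintro ⟨j, hj, h, hk⟩
    rcases (Nat.lt_succ_iff.1 hj).lt_or_eq with h1 | h1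
    · exact Or.inr ⟨hk i h1 (by omega), j, h1, h, fun k h2 h3 => hk k h2 (by omega)⟩
    · subst h1; exact Or.inl h
  · rintro (h | ⟨h, j, hj, h', hk⟩)
    · exact ⟨i, by omega, h, fun k h1 h2 => by omega⟩
    · refine ⟨j, by omega, h', fun k h1 h2 => ?_⟩
      rcases (Nat.lt_succ_iff.1 h2).lt_or_eq with h3 | h3
      · exact hk k h1 h3
      · subst h3; exact h

lemma mod_two_pow_succ' (a i : ℕ) :
    a % 2 ^ (i + 1) = a % 2 ^ i + 2 ^ i * (a.testBit i).toNat := by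
  rw [Nat.mod_pow_succ, Nat.toNat_testBit]

lemma carry_iff (a b i : ℕ) : Carry a b i ↔ 2 ^ i ≤ a % 2 ^ i + b % 2 ^ i := by
  induction i with
  | zero => simp [Carry, Nat.mod_one]
  | succ i ih =>
    rw [carry_succ, ih, mod_two_pow_succ', mod_two_pow_succ' b, pow_succ]
    have ha := Nat.mod_lt a (Nat.two_pow_pos i)
    have hb := Nat.mod_lt b (Nat.two_pow_pos i)
    cases a.testBit i <;> cases b.testBit i <;> simp <;> omega

lemma testBit_add (a b i : ℕ) : (a + b).testBit i = true ↔
    ¬ ((¬ (a.testBit i = true ↔ b.testBit i = true)) ↔ Carry a b i) := by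
  rw [carry_iff]
  have ha := Nat.mod_lt a (Nat.two_pow_pos i)
  have hb := Nat.mod_lt b (Nat.two_pow_pos i)
  have e : (a + b) / 2 ^ i = a / 2 ^ i + b / 2 ^ i +
      (if 2 ^ i ≤ a % 2 ^ i + b % 2 ^ i then 1 else 0) :=
    Nat.add_div (Nat.two_pow_pos i)
  simp only [Nat.testBit_eq_decide_div_mod_eq, decide_eq_true_eq, e]
  generalize a / 2 ^ i = x
  generalize b / 2 ^ i = y
  by_cases h : 2 ^ i ≤ a % 2 ^ i + b % 2 ^ i
  · rcases Nat.mod_two_eq_zero_or_one x with hx | hx <;>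
      rcases Nat.mod_two_eq_zero_or_one y with hy | hy <;>
      simp [h, Nat.add_mod, hx, hy]
  · rcases Nat.mod_two_eq_zero_or_one x with hx | hx <;>
      rcases Nat.mod_two_eq_zero_or_one y with hy | hy <;>
      simp [h, Nat.add_mod, hx, hy]

lemma d_carry : D2 (fun y i => Carry (qseq (col y)) (rowf y) (rowf i)) := by
  refine D.congr (P := fun n v => ∃ j : Fin (n + 1), rowf j < rowf (v 1) ∧
      ((qseq (col (v 0))).testBit (rowf j) = true ∧ (rowf (v 0)).testBit (rowf j) = true) ∧
      ∀ k : Fin (n + 1), rowf j < rowf k → rowf k < rowf (v 1) →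
        ((qseq (col (v 0))).testBit (rowf k) = true ∨ (rowf (v 0)).testBit (rowf k) = true))
    (D.ex ((d_rowLt.app _ _).and (((d_bitCol.app _ _).and (d_bitRow.app _ _)).and
      (D.all ((d_rowLt.app _ _).imp ((d_rowLt.app _ _).imp
        ((d_bitCol.app _ _).or (d_bitRow.app _ _)))))))) (fun n v => ?_)
  generalize v 0 = y
  generalize v 1 = i
  have hi := row_le i
  constructor
  · rintro ⟨j, hj, h, hk⟩
    refine ⟨rowf j, hj, h, fun k h1 h2 => ?_⟩
    obtain ⟨z, h3, h4⟩ := exists_fin i (c := col i) (r := k) (by omega) (Or.inr ⟨rfl, h2.le⟩)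
    rw [← h4]
    exact hk z (by omega) (by omega)
  · rintro ⟨j, hj, h, hk⟩
    obtain ⟨z, h3, h4⟩ := exists_fin i (c := col i) (r := j) (by omega) (Or.inr ⟨rfl, hj.le⟩)
    subst h4
    exact ⟨z, hj, h, fun k h1 h2 => hk _ h1 h2⟩

lemma d_bitSum : D2 (fun y i => y.testBit (rowf i) = true) := by
  refine D.congr (P := fun n v => ¬ ((¬ ((qseq (col (v 0))).testBit (rowf (v 1)) = true ↔
      (rowf (v 0)).testBit (rowf (v 1)) = true)) ↔ Carry (qseq (col (v 0))) (rowf (v 0)) (rowf (v 1))))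
    ((((d_bitCol.app _ _).iff (d_bitRow.app _ _)).not).iff (d_carry.app _ _)).not (fun n v => ?_)
  generalize v 0 = y
  generalize v 1 = i
  have := testBit_add (qseq (col y)) (rowf y) (rowf i)
  rw [← eq_add] at this
  exact this.symm

lemma d_row1 : D1 (fun x => rowf x = 1) := by
  refine D.congr (P := fun n v => ∃ z : Fin (n + 1), (z : ℕ) = 0 ∧ col z + 1 = rowf (v 0))
    (D.ex ((d_zero.app _).and (d_colSuccRow.app _ _))) (fun n v => ?_)
  have h00 := coord (x := 0) (c := 0) (r := 0) le_rfl (by simp [qseq_zero])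
  constructor
  · rintro ⟨z, h, h'⟩
    rw [h] at h'; omega
  · intro h
    exact ⟨0, by simp, by simp [h00.1, h]⟩

lemma d_row : D2 (fun x y => rowf x = y) := by
  refine D.congr (P := fun n v => (rowf (v 0) = 0 ∧ (v 1 : ℕ) = 0) ∨ (rowf (v 0) = 1 ∧ (v 1 : ℕ) = 1) ∨
      (col (v 1) < rowf (v 0) ∧ ∀ i : Fin (n + 1), rowf i < rowf (v 0) →
        ((rowf (v 0)).testBit (rowf i) = true ↔ (v 1 : ℕ).testBit (rowf i) = true)))
    (((d_row0.app _).and (d_zero.app _)).or (((d_row1.app _).and (d_one.app _)).or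
      ((d_colLtRow.app _ _).and (D.all ((d_rowLt.app _ _).imp
        ((d_bitRow.app _ _).iff (d_bitSum.app _ _))))))) (fun n v => ?_)
  generalize v 0 = x
  generalize v 1 = y
  have hx := row_le x
  constructor
  · rintro (h | h | ⟨h, h'⟩)
    · omega
    · omega
    · have hy : (y : ℕ) < 2 ^ rowf x := by
        have h1 := eq_add y
        have h2 := row_le y
        have h3 := qseq_lt h
        have h4 := qseq_lt_two_pow (rowf x)
        omega
      apply Nat.eq_of_testBit_eq
      intro k
      by_cases hk : k < rowf x
      · obtain ⟨z, h3, h4⟩ := exists_fin x (c := col x) (r := k) (by omega) (Or.inr ⟨rfl, hk.le⟩)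
        subst h4
        exact Bool.eq_iff_iff.2 (h' z hk)
      · have h2 : 2 ^ rowf x ≤ 2 ^ k := Nat.pow_le_pow_right (by norm_num) (not_lt.1 hk)
        rw [Nat.testBit_lt_two_pow (hy.trans_le h2),
          Nat.testBit_lt_two_pow (Nat.lt_two_pow_self.trans_le h2)]
  · intro h
    by_cases h0 : (y : ℕ) = 0
    · left; omega
    by_cases h1 : (y : ℕ) = 1
    · right; left; omega
    right; right
    refine ⟨?_, fun i _ => by rw [h]⟩
    rw [h]
    have h2 := eq_add y
    by_contra hc
    have h3 := qseq_mono (not_lt.1 hc)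
    have h4 := qseq_succ (y - 1)
    have h5 := le_qseq (y - 1)
    rw [show (y : ℕ) - 1 + 1 = y by omega] at h4
    omega

end RowDef

/-- Lemma 3.6: there is an FO(<,◁,C,Q)-formula `φr(x,y)`
expressing that `r(x) = y`. -/
theorem lt_ordc_C_Q_define_r :
    ∃ φr : L4.Formula (Fin 2),
      ∀ n : ℕ,
        letI := struct4 n
        ∀ a b : Fin (n + 1),
          φr.Realize ![a, b] ↔ rowf (a : ℕ) = (b : ℕ) := by
  obtain ⟨φ, hφ⟩ := RowDef.d_row
  exact ⟨φ, fun n a b => hφ n ![a, b]⟩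
end
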